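/- arXiv:1308.1818 — 5 statements merged into one kernel-verified Lean document; each statement's English description precedes it below -/
import Mathlib

section
/- Let X be a real Banach space and let D ⊆ X* be an r-norming linear subspace of the dual (r ≥ 1). Then X has an r-projectional skeleton s = {P_s}_{s∈Γ} with D(s) = D if and only if X has a simple r-projectional skeleton s' = {P_F}_{F∈𝓕} with D(s') = D. -/
/-!
A simple skeleton becomes an ordinary one by indexing it by its rich family, ordered by inclusion:
suprema of increasing sequences are closures of unions.

For the converse, the difficulty is that in a skeleton `P` over `Γ` the range of `P s` determines
neither `s` nor `P s`. So an index has to be attached to subspaces in a monotone way.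

* A monotone choice on finite sets, followed by suprema along countable ones, gives a map `τ` from
  countable subsets of `X` to `Γ` that is monotone, commutes with increasing countable unions and
  satisfies `A ⊆ range (P (τ A))` (`IsProjSkeleton.exists_index`).
* Let `B = ⋃ k, B k` with `B k` a maximal `1 / (k + 1)`-separated subset of `X`, and let `N F` be
  the set of points of some `B k` at distance less than `1 / (2 (k + 1))` from `F`. If `F` is
  separable, then `N F` is countable, because `B k` is separated. Since nearness to `F` is an open
  condition, `N` commutes with closures of unions (`exists_trace`).

Then `F ↦ τ (N F)` is monotone and continuous along increasing sequences, so the subspaces `F` with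
`range (P (τ (N F))) = F` form a family closed under increasing sequences, and `P (τ (N F))` is a
compatible family of projections on it. Cofinality comes from the density of `B`: starting with a
countable part of `B` whose closure contains a given separable subspace, iterate
`A ↦ N (range (P (τ A)))` and take the union.

Finally, given `s₀ : Γ`, interleave an increasing sequence in `Γ` starting at `s₀` with members of
the family, so that in the limit some `s ≥ s₀` and some `t = τ (N F) ≤ s` satisfy
`range (P s) = range (P t)`. Then `P s = P t ∘ P s = P t`, so every functional `f ∘ P s₀`
factors through `P t`, and passing to the family does not shrink the dual set.
-/

open Set TopologicalSpace Filter Metric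

universe u

section Defs

variable {X : Type*} [NormedAddCommGroup X] [NormedSpace ℝ X]

/-- A projectional skeleton in a Banach space `X`: a family of bounded linear projections
indexed by an up-directed partially ordered set `Γ` such that each range is separable,
the ranges cover `X`, projections are compatible along `≤`, and for every strictly
increasing sequence the supremum exists and its range is the closure of the union of
the ranges. -/
structure IsProjSkeleton {Γ : Type*} [PartialOrder Γ] (P : Γ → X →L[ℝ] X) : Prop where
  directed : ∀ s t : Γ, ∃ u, s ≤ u ∧ t ≤ u
  separable_range : ∀ s, TopologicalSpace.IsSeparable (Set.range (P s))
  covers : ∀ x : X, ∃ s, x ∈ Set.range (P s)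
  comp_of_le : ∀ s t : Γ, s ≤ t → (P s).comp (P t) = P s ∧ (P t).comp (P s) = P s
  lub_of_strictMono : ∀ s : ℕ → Γ, StrictMono s → ∃ t : Γ, IsLUB (Set.range s) t ∧
    Set.range (P t) = closure (⋃ n, Set.range (P (s n)))

/-- `D(𝔰) = ⋃_{s ∈ Γ} P_s^*(X^*)`, the union of the ranges of the adjoints of the
projections (the adjoint of `P_s` sends `f` to `f ∘ P_s`). -/
def skeletonDualSet {Γ : Type*} (P : Γ → X →L[ℝ] X) : Set (X →L[ℝ] ℝ) :=
  ⋃ s : Γ, Set.range fun f : X →L[ℝ] ℝ => f.comp (P s)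

/-- A rich family of separable subspaces of `X`: a family of closed separable subspaces
such that every closed separable subspace is contained in a member, and the closure of
the union of any increasing sequence of members is a member. -/
def IsRichFamily (𝓕 : Set (Submodule ℝ X)) : Prop :=
  (∀ F ∈ 𝓕, IsClosed (F : Set X) ∧ TopologicalSpace.IsSeparable (F : Set X)) ∧
  (∀ S : Submodule ℝ X, IsClosed (S : Set X) → TopologicalSpace.IsSeparable (S : Set X) →
    ∃ F ∈ 𝓕, S ≤ F) ∧
  ∀ F : ℕ → Submodule ℝ X, (∀ n, F n ∈ 𝓕) → Monotone F →
    (⨆ n, F n).topologicalClosure ∈ 𝓕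

/-- A simple projectional skeleton: a family of bounded linear projections indexed by a
rich family `𝓕` (ordered by inclusion), with `P_F(X) = F` and compatibility along
inclusion. -/
structure IsSimpleProjSkeleton (𝓕 : Set (Submodule ℝ X))
    (P : Submodule ℝ X → X →L[ℝ] X) : Prop where
  rich : IsRichFamily 𝓕
  range_eq : ∀ F ∈ 𝓕, Set.range (P F) = (F : Set X)
  comp_of_le : ∀ E ∈ 𝓕, ∀ F ∈ 𝓕, E ≤ F →
    (P E).comp (P F) = P E ∧ (P F).comp (P E) = P E

/-- `D(𝔰')` for a simple projectional skeleton. -/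
def simpleDualSet (𝓕 : Set (Submodule ℝ X)) (P : Submodule ℝ X → X →L[ℝ] X) :
    Set (X →L[ℝ] ℝ) :=
  ⋃ F ∈ 𝓕, Set.range fun f : X →L[ℝ] ℝ => f.comp (P F)

/-- A subspace `D ⊆ X^*` is `r`-norming if
`‖x‖ ≤ r ⬝ sup {|f x| : f ∈ D, ‖f‖ ≤ 1}` for every `x ∈ X`. -/
def IsNormingSubspace (r : ℝ) (D : Submodule ℝ (X →L[ℝ] ℝ)) : Prop :=
  ∀ x : X, ‖x‖ ≤ r * sSup ((fun f : X →L[ℝ] ℝ => |f x|) '' {f | f ∈ D ∧ ‖f‖ ≤ 1})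

end Defs

/-! ### Separated nets and traces of separable sets -/

section Trace

/-- Maximal `δ`-separated sets exist, and they are `δ`-nets. -/
lemma exists_separated_net {X : Type*} [MetricSpace X] {δ : ℝ} (hδ : 0 < δ) :
    ∃ B : Set X, (∀ x ∈ B, ∀ y ∈ B, dist x y < δ → x = y) ∧ ∀ x, ∃ b ∈ B, dist x b < δ := by
  obtain ⟨B, hB⟩ := zorn_subset {B : Set X | ∀ x ∈ B, ∀ y ∈ B, dist x y < δ → x = y} (by
    intro c hc hch
    refine ⟨⋃₀ c, ?_, fun s hs => subset_sUnion_of_mem hs⟩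
    rintro x ⟨s, hs, hxs⟩ y ⟨t, ht, hyt⟩ hxy
    rcases hch.total hs ht with h | h
    · exact hc ht x (h hxs) y hyt hxy
    · exact hc hs x hxs y (h hyt) hxy)
  refine ⟨B, hB.prop, fun x => ?_⟩
  by_contra! hx
  have h : insert x B ⊆ B := hB.le_of_ge (by
    rintro y (rfl | hy) z (rfl | hz) hyz
    · rfl
    · exact absurd hyz (not_lt.2 (hx z hz))
    · rw [dist_comm] at hyz
      exact absurd hyz (not_lt.2 (hx y hy))
    · exact hB.prop y hy z hz hyz) (subset_insert x B)
  have := hx x (h (mem_insert x B))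
  rw [dist_self] at this
  exact absurd hδ (not_lt.2 this)

/-- In a metric space there are a dense set `B` and an operator `N` assigning to each set `F` the
points of `B` sufficiently near to `F`, where the required nearness depends on the point, such that
`N F` is countable for separable `F` and `N` commutes with closures of unions. -/
lemma exists_trace (X : Type*) [MetricSpace X] :
    ∃ (B : Set X) (N : Set X → Set X), Monotone N ∧
      (∀ F, IsSeparable F → (N F).Countable) ∧
      (∀ F : ℕ → Set X, N (closure (⋃ n, F n)) = ⋃ n, N (F n)) ∧
      (∀ F, N F ⊆ B) ∧ (∀ F, B ∩ F ⊆ N F) ∧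
      ∀ S : Set X, IsSeparable S → ∃ A ⊆ B, A.Countable ∧ S ⊆ closure A := by
  have hpos : ∀ k : ℕ, (0 : ℝ) < 1 / ((k : ℝ) + 1) := fun k => Nat.one_div_pos_of_nat
  choose B hsep hnet using fun k : ℕ => exists_separated_net (X := X) (hpos k)
  choose b hbB hb using hnet
  refine ⟨⋃ k, B k, fun F => ⋃ k : ℕ, {z | z ∈ B k ∧ ∃ y ∈ F, dist z y < 1 / ((k : ℝ) + 1) / 2},
    ?_, ?_, ?_, fun F => iUnion_mono fun k => fun z hz => hz.1, ?_, ?_⟩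
  · intro F G hFG z hz
    simp only [mem_iUnion, mem_ofPred_eq] at hz ⊢
    obtain ⟨k, hz, y, hy, hd⟩ := hz
    exact ⟨k, hz, y, hFG hy, hd⟩
  · rintro F ⟨C, hC, hFC⟩
    refine countable_iUnion fun k => ?_
    refine Countable.mono (s₂ := ⋃ c ∈ C, {z | z ∈ B k ∧ dist z c < 1 / ((k : ℝ) + 1) / 2}) ?_
      (hC.biUnion fun c _ => Set.Subsingleton.countable ?_)
    · rintro z ⟨hz, y, hy, hd⟩
      obtain ⟨c, hc, hyc⟩ := Metric.mem_closure_iff.1 (hFC hy) _ (sub_pos.2 hd)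
      refine mem_biUnion hc ⟨hz, ?_⟩
      linarith [dist_triangle z y c]
    · rintro z ⟨hz, hzc⟩ w ⟨hw, hwc⟩
      refine hsep k z hz w hw ?_
      linarith [dist_triangle_right z w c]
  · intro F
    ext z
    simp only [mem_iUnion, mem_ofPred_eq]
    constructor
    · rintro ⟨k, hz, y, hy, hd⟩
      obtain ⟨c, hc, hyc⟩ := Metric.mem_closure_iff.1 hy _ (sub_pos.2 hd)
      obtain ⟨n, hn⟩ := mem_iUnion.1 hc
      exact ⟨n, k, hz, c, hn, by linarith [dist_triangle z y c]⟩
    · rintro ⟨n, k, hz, y, hy, hd⟩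
      exact ⟨k, hz, y, subset_closure (mem_iUnion.2 ⟨n, hy⟩), hd⟩
  · rintro F z ⟨hz, hzF⟩
    obtain ⟨k, hk⟩ := mem_iUnion.1 hz
    exact mem_iUnion.2 ⟨k, hk, z, hzF, by rw [dist_self]; exact half_pos (hpos k)⟩
  · rintro S ⟨C, hC, hSC⟩
    refine ⟨⋃ k, b k '' C, iUnion_mono fun k => ?_, countable_iUnion fun k => hC.image _, ?_⟩
    · rintro _ ⟨c, -, rfl⟩
      exact hbB k c
    · refine hSC.trans (closure_minimal (fun c hc => ?_) isClosed_closure)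
      refine Metric.mem_closure_iff.2 fun ε hε => ?_
      obtain ⟨k, hk⟩ := exists_nat_one_div_lt hε
      exact ⟨b k c, mem_iUnion.2 ⟨k, c, hc, rfl⟩, (hb k c).trans hk⟩

end Trace

/-! ### Indexing countable sets by a projectional skeleton -/

/-- A directed order receives a monotone map from the finite subsets of `α` whose value at each
singleton `{a}` dominates a prescribed element `c a`. -/
lemma exists_monotone_finset {α Γ : Type*} [PartialOrder Γ] [Nonempty Γ] [IsDirectedOrder Γ]
    (c : α → Γ) : ∃ σ : Finset α → Γ, Monotone σ ∧ ∀ a, c a ≤ σ {a} := by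
  classical
  have key : ∀ (S : Finset α) (f : ∀ T : Finset α, T ⊂ S → Γ),
      ∃ u : Γ, (∀ T h, f T h ≤ u) ∧ ∀ a ∈ S, c a ≤ u := by
    intro S f
    obtain ⟨u, hu⟩ := Finset.exists_le (S.ssubsets.attach.image
      (fun T : {T // T ∈ S.ssubsets} => f T.1 (Finset.mem_ssubsets.1 T.2)) ∪ S.image c)
    refine ⟨u, fun T h => hu _ ?_, fun a ha => hu _ ?_⟩
    · exact Finset.mem_union_left _ (Finset.mem_image.2
        ⟨⟨T, Finset.mem_ssubsets.2 h⟩, Finset.mem_attach _ _, rfl⟩)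
    · exact Finset.mem_union_right _ (Finset.mem_image_of_mem _ ha)
  choose g hg₁ hg₂ using key
  let σ : Finset α → Γ := fun S => Finset.strongInduction g S
  have hσ : ∀ S, σ S = g S fun T _ => σ T := fun S => Finset.strongInduction_eq g S
  refine ⟨σ, fun S T hST => ?_, fun a => ?_⟩
  · rcases hST.eq_or_lt with rfl | h
    · exact le_rfl
    · rw [hσ T]
      exact hg₁ T (fun T _ => σ T) S h
  · rw [hσ {a}]
    exact hg₂ {a} (fun T _ => σ T) a (Finset.mem_singleton_self a)

namespace IsProjSkeleton

variable {X : Type*} [NormedAddCommGroup X] [NormedSpace ℝ X]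
  {Γ : Type*} [PartialOrder Γ] {P : Γ → X →L[ℝ] X}

lemma apply_of_mem (h : IsProjSkeleton P) {s : Γ} {x : X} (hx : x ∈ range (P s)) : P s x = x := by
  obtain ⟨y, rfl⟩ := hx
  exact DFunLike.congr_fun (h.comp_of_le s s le_rfl).1 y

lemma isClosed_range (h : IsProjSkeleton P) (s : Γ) : IsClosed (range (P s)) := by
  have : range (P s) = {x | P s x = x} :=
    Subset.antisymm (fun x hx => h.apply_of_mem hx) fun x hx => ⟨x, hx⟩
  rw [this]
  exact isClosed_eq (P s).continuous continuous_id

lemma range_mono (h : IsProjSkeleton P) {s t : Γ} (hst : s ≤ t) :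
    range (P s) ⊆ range (P t) := by
  rintro _ ⟨x, rfl⟩
  exact ⟨P s x, DFunLike.congr_fun (h.comp_of_le s t hst).2 x⟩

/-- Extends the supremum axiom from strictly monotone to monotone sequences. -/
lemma exists_isLUB (h : IsProjSkeleton P) {s : ℕ → Γ} (hs : Monotone s) :
    ∃ t, IsLUB (range s) t ∧ range (P t) = closure (⋃ n, range (P (s n))) := by
  by_cases hc : ∃ N, ∀ n, N ≤ n → s n = s N
  · obtain ⟨N, hN⟩ := hc
    have hle : ∀ n, s n ≤ s N := fun n =>
      (hs (le_max_left n N)).trans (hN _ (le_max_right n N)).le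
    refine ⟨s N, ⟨by rintro _ ⟨n, rfl⟩; exact hle n, fun u hu => hu ⟨N, rfl⟩⟩, ?_⟩
    refine Subset.antisymm ((subset_iUnion (fun n => range (P (s n))) N).trans subset_closure) ?_
    exact closure_minimal (iUnion_subset fun n => h.range_mono (hle n)) (h.isClosed_range _)
  · push Not at hc
    choose g hg₁ hg₂ using hc
    have hlt : ∀ N, s N < s (g N) := fun N => lt_of_le_of_ne (hs (hg₁ N)) (hg₂ N).symm
    let φ : ℕ → ℕ := fun n => g^[n] 0
    have hφ : ∀ n, φ (n + 1) = g (φ n) := fun n => Function.iterate_succ_apply' g n 0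
    have hsφ : StrictMono (s ∘ φ) := strictMono_nat_of_lt_succ fun n => by
      simp only [Function.comp_apply, hφ]
      exact hlt _
    have hφm : StrictMono φ := strictMono_nat_of_lt_succ fun n => by
      rw [hφ]
      exact hs.reflect_lt (hlt _)
    obtain ⟨t, ht, htr⟩ := h.lub_of_strictMono _ hsφ
    have hsle : ∀ n, s n ≤ s (φ n) := fun n => hs (hφm.id_le n)
    refine ⟨t, ⟨?_, fun u hu => ht.2 ?_⟩, ?_⟩
    · rintro _ ⟨n, rfl⟩
      exact (hsle n).trans (ht.1 ⟨n, rfl⟩)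
    · rintro _ ⟨n, rfl⟩
      exact hu ⟨φ n, rfl⟩
    · rw [htr]
      refine congrArg closure (Subset.antisymm ?_ ?_)
      · exact iUnion_subset fun n => subset_iUnion (fun n => range (P (s n))) (φ n)
      · exact iUnion_mono fun n => h.range_mono (hsle n)

lemma range_eq_of_isLUB (h : IsProjSkeleton P) {s : ℕ → Γ} (hs : Monotone s) {t : Γ}
    (ht : IsLUB (range s) t) : range (P t) = closure (⋃ n, range (P (s n))) := by
  obtain ⟨t', ht', h'⟩ := h.exists_isLUB hs
  rw [ht.unique ht', h']

/-- Countable subsets of `X` are assigned indices monotonically, compatibly with increasing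
unions, and so that each set lies in the range of the projection at its index. -/
lemma exists_index (h : IsProjSkeleton P) :
    ∃ τ : Set X → Γ, (∀ A A', A ⊆ A' → A'.Countable → τ A ≤ τ A') ∧
      (∀ A, A.Countable → A ⊆ range (P (τ A))) ∧
      ∀ A : ℕ → Set X, Monotone A → (∀ n, (A n).Countable) →
        IsLUB (range fun n => τ (A n)) (τ (⋃ n, A n)) ∧
        range (P (τ (⋃ n, A n))) = closure (⋃ n, range (P (τ (A n)))) := by
  classical
  have : Nonempty Γ := ⟨(h.covers 0).choose⟩
  have : IsDirectedOrder Γ := ⟨h.directed⟩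
  choose c hc using h.covers
  obtain ⟨σ, hσ, hcσ⟩ := exists_monotone_finset c
  have key : ∀ A : Set X, A.Countable → ∃ t, IsLUB (σ '' {S | (S : Set X) ⊆ A}) t := by
    intro A hA
    -- A countable set is exhausted by an increasing sequence of finite sets.
    obtain ⟨S, hSm, hSA, hScof⟩ : ∃ S : ℕ → Finset X, Monotone S ∧ (∀ n, (S n : Set X) ⊆ A) ∧
        ∀ T : Finset X, (T : Set X) ⊆ A → ∃ n, T ⊆ S n := by
      rcases A.eq_empty_or_nonempty with rfl | hne
      · exact ⟨fun _ => ∅, monotone_const, fun n => by simp, fun T hT => ⟨0, by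
          simpa using hT⟩⟩
      · obtain ⟨e, rfl⟩ := hA.exists_eq_range hne
        refine ⟨fun n => (Finset.range n).image e, fun m n hmn =>
          Finset.image_subset_image (Finset.range_mono hmn), fun n => by
            rw [Finset.coe_image]; exact image_subset_range _ _, fun T hT => ?_⟩
        choose! i hi using fun x (hx : x ∈ T) => hT hx
        refine ⟨T.sup i + 1, fun x hx => Finset.mem_image.2 ⟨i x, ?_, hi x hx⟩⟩
        exact Finset.mem_range.2 (Nat.lt_succ_of_le (Finset.le_sup hx))
    obtain ⟨t, ht, -⟩ := h.exists_isLUB (hσ.comp hSm)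
    refine ⟨t, ?_, fun u hu => ht.2 ?_⟩
    · rintro _ ⟨T, hT, rfl⟩
      obtain ⟨n, hn⟩ := hScof T hT
      exact (hσ hn).trans (ht.1 ⟨n, rfl⟩)
    · rintro _ ⟨n, rfl⟩
      exact hu ⟨S n, hSA n, rfl⟩
  choose! τ hτ using key
  have hmono : ∀ A A', A ⊆ A' → A'.Countable → τ A ≤ τ A' := by
    intro A A' hAA hA'
    refine (hτ A (hA'.mono hAA)).2 ?_
    rintro _ ⟨T, hT, rfl⟩
    exact (hτ A' hA').1 ⟨T, Subset.trans hT hAA, rfl⟩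
  refine ⟨τ, hmono, fun A hA a ha => ?_, fun A hAm hA => ?_⟩
  · refine h.range_mono ?_ (hc a)
    exact (hcσ a).trans ((hτ A hA).1 ⟨{a}, by simpa using ha, rfl⟩)
  · have hU : (⋃ n, A n).Countable := countable_iUnion hA
    have hlub : IsLUB (range fun n => τ (A n)) (τ (⋃ n, A n)) := by
      refine ⟨?_, fun u hu => (hτ _ hU).2 ?_⟩
      · rintro _ ⟨n, rfl⟩
        exact hmono _ _ (subset_iUnion A n) hU
      · rintro _ ⟨T, hT, rfl⟩
        obtain ⟨n, hn⟩ := Directed.exists_mem_subset_of_finset_subset_biUnion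
          (hAm.directed_le) hT
        exact ((hτ _ (hA n)).1 ⟨T, hn, rfl⟩).trans (hu ⟨n, rfl⟩)
    exact ⟨hlub, h.range_eq_of_isLUB (fun m n hmn => hmono _ _ (hAm hmn) (hA n)) hlub⟩

/-! ### From a skeleton to a simple skeleton -/

/-- Every projectional skeleton has a simple subskeleton inducing the same dual set. -/
lemma exists_simple (h : IsProjSkeleton P) :
    ∃ (𝓕 : Set (Submodule ℝ X)) (i : Submodule ℝ X → Γ),
      IsSimpleProjSkeleton 𝓕 (fun F => P (i F)) ∧
      simpleDualSet 𝓕 (fun F => P (i F)) = skeletonDualSet P := by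
  obtain ⟨τ, hτm, hτs, hτU⟩ := h.exists_index
  obtain ⟨B, N, hNm, hNc, hNU, hNB, hBN, hBd⟩ := exists_trace X
  let 𝓕 : Set (Submodule ℝ X) := {F | range (P (τ (N F))) = F}
  have hsep : ∀ F ∈ 𝓕, IsSeparable (F : Set X) := fun F hF =>
    (show range (P (τ (N F))) = F from hF) ▸ h.separable_range _
  have hle : ∀ E ∈ 𝓕, ∀ F ∈ 𝓕, E ≤ F → τ (N E) ≤ τ (N F) := fun E _ F hF hEF =>
    hτm _ _ (hNm hEF) (hNc _ (hsep F hF))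
  have hcoe : ∀ F : ℕ → Submodule ℝ X, Monotone F →
      ((⨆ n, F n).topologicalClosure : Set X) = closure (⋃ n, (F n : Set X)) := fun F hFm => by
    rw [Submodule.topologicalClosure_coe, Submodule.coe_iSup_of_directed _ hFm.directed_le]
  -- The limit of an increasing sequence in the family, together with its index.
  have hlim : ∀ F : ℕ → Submodule ℝ X, (∀ n, F n ∈ 𝓕) → Monotone F →
      (⨆ n, F n).topologicalClosure ∈ 𝓕 ∧ IsLUB (range fun n => τ (N (F n)))
        (τ (N ((⨆ n, F n).topologicalClosure : Submodule ℝ X))) := by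
    intro F hF hFm
    obtain ⟨h₁, h₂⟩ := hτU (fun n => N (F n)) (fun m n hmn => hNm (hFm hmn))
      fun n => hNc _ (hsep _ (hF n))
    have hN : N ((⨆ n, F n).topologicalClosure : Submodule ℝ X) = ⋃ n, N (F n) := by
      rw [hcoe F hFm, hNU]
    refine ⟨?_, by rw [hN]; exact h₁⟩
    change range (P (τ (N _))) = _
    rw [hN, h₂, hcoe F hFm]
    exact congrArg closure (iUnion_congr hF)
  have hcof : ∀ S : Set X, IsSeparable S → ∃ F ∈ 𝓕, S ⊆ (F : Set X) := by
    intro S hS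
    obtain ⟨A₀, hA₀B, hA₀c, hSA⟩ := hBd S hS
    have hNr : ∀ A, (N (range (P (τ A)))).Countable := fun A => hNc _ (h.separable_range _)
    let A : ℕ → Set X := fun n => Nat.rec A₀ (fun _ A => N (range (P (τ A)))) n
    have hA : ∀ n, A (n + 1) = N (range (P (τ (A n)))) := fun n => rfl
    have hAc : ∀ n, (A n).Countable := by
      rintro (_ | n)
      exacts [hA₀c, hNr _]
    have hAB : ∀ n, A n ⊆ B := by
      rintro (_ | n)
      exacts [hA₀B, hNB _]
    have hAm : Monotone A := monotone_nat_of_le_succ fun n x hx =>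
      hBN _ ⟨hAB n hx, hτs _ (hAc n) hx⟩
    obtain ⟨-, hr⟩ := hτU A hAm hAc
    have hNF : N (range (P (τ (⋃ n, A n)))) = ⋃ n, A n := by
      rw [hr, hNU]
      refine Subset.antisymm (iUnion_subset fun n => subset_iUnion A (n + 1)) ?_
      exact iUnion_mono fun n => hAm n.le_succ
    refine ⟨LinearMap.range (P (τ (⋃ n, A n)) : X →ₗ[ℝ] X), ?_, ?_⟩
    · change range (P (τ (N (range (P (τ (⋃ n, A n))))))) = range (P (τ (⋃ n, A n)))
      rw [hNF]
    · refine hSA.trans (closure_minimal ?_ (h.isClosed_range _))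
      exact (subset_iUnion A 0).trans (hτs _ (countable_iUnion hAc))
  refine ⟨𝓕, fun F => τ (N F), ⟨⟨fun F hF => ⟨?_, hsep F hF⟩, fun S _ hS => hcof S hS,
    fun F hF hFm => (hlim F hF hFm).1⟩, fun F hF => hF,
    fun E hE F hF hEF => h.comp_of_le _ _ (hle E hE F hF hEF)⟩, Subset.antisymm ?_ ?_⟩
  · rw [← (show range (P (τ (N F))) = F from hF)]
    exact h.isClosed_range _
  · exact iUnion₂_subset fun F _ =>
      subset_iUnion (fun s => range fun f : X →L[ℝ] ℝ => f.comp (P s)) (τ (N F))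
  · refine iUnion_subset fun s₀ => ?_
    rintro _ ⟨f, rfl⟩
    choose G hG𝓕 hG using fun s => hcof _ (h.separable_range s)
    choose next hnext₁ hnext₂ using fun s => h.directed s (τ (N (G s)))
    let s : ℕ → Γ := fun n => next^[n] s₀
    have hs : ∀ n, s (n + 1) = next (s n) := fun n => Function.iterate_succ_apply' next n s₀
    have hsm : Monotone s := monotone_nat_of_le_succ fun n => by
      rw [hs]
      exact hnext₁ _
    have hGm : Monotone fun n => G (s n) := monotone_nat_of_le_succ fun n => by
      refine SetLike.coe_subset_coe.1 (Subset.trans ?_ (hG (s (n + 1))))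
      rw [← (show range (P (τ (N (G (s n))))) = G (s n) from hG𝓕 _), hs]
      exact h.range_mono (hnext₂ _)
    obtain ⟨hF, hlub⟩ := hlim (fun n => G (s n)) (fun n => hG𝓕 _) hGm
    obtain ⟨u, hu, hur⟩ := h.exists_isLUB hsm
    set F := (⨆ n, G (s n)).topologicalClosure with hFdef
    have htu : τ (N F) ≤ u := hlub.2 (by
      rintro _ ⟨n, rfl⟩
      refine (hnext₂ (s n)).trans ?_
      rw [← hs]
      exact hu.1 ⟨n + 1, rfl⟩)
    have hsub : range (P u) ⊆ range (P (τ (N F))) := by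
      rw [hur, show range (P (τ (N F))) = F from hF, hFdef, hcoe _ hGm]
      exact closure_mono (iUnion_mono fun n => hG (s n))
    have hPu : P u = P (τ (N F)) := by
      ext x
      rw [← DFunLike.congr_fun (h.comp_of_le _ _ htu).1 x]
      exact (h.apply_of_mem (hsub ⟨x, rfl⟩)).symm
    refine mem_iUnion₂.2 ⟨F, hF, f.comp (P s₀), ?_⟩
    simp only [← hPu, ContinuousLinearMap.comp_assoc]
    rw [(h.comp_of_le s₀ u (hu.1 ⟨0, rfl⟩)).1]

end IsProjSkeleton

/-! ### From a simple skeleton to a skeleton -/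

/-- A simple skeleton, indexed by the members of its rich family, is a skeleton. -/
lemma IsSimpleProjSkeleton.isProjSkeleton {X : Type*} [NormedAddCommGroup X] [NormedSpace ℝ X]
    {𝓕 : Set (Submodule ℝ X)} {P : Submodule ℝ X → X →L[ℝ] X} (h : IsSimpleProjSkeleton 𝓕 P) :
    IsProjSkeleton (fun F : 𝓕 => P F) := by
  obtain ⟨hcs, hcof, hlim⟩ := h.rich
  have hcof' : ∀ S : Submodule ℝ X, IsSeparable (S : Set X) → ∃ F : 𝓕, S ≤ F := fun S hS => by
    obtain ⟨F, hF, hSF⟩ := hcof S.topologicalClosure S.isClosed_topologicalClosure hS.closure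
    exact ⟨⟨F, hF⟩, S.le_topologicalClosure.trans hSF⟩
  refine ⟨fun E F => ?_, fun F => ?_, fun x => ?_, fun E F hEF => h.comp_of_le E E.2 F F.2 hEF,
    fun F hF => ?_⟩
  · have hS : IsSeparable ((E.1 ⊔ F.1 : Submodule ℝ X) : Set X) := by
      rw [← Submodule.span_eq E.1, ← Submodule.span_eq F.1, ← Submodule.span_union]
      exact ((hcs E E.2).2.union (hcs F F.2).2).span
    obtain ⟨G, hG⟩ := hcof' _ hS
    exact ⟨G, le_sup_left.trans hG, le_sup_right.trans hG⟩
  · rw [h.range_eq F F.2]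
    exact (hcs F F.2).2
  · obtain ⟨F, hF⟩ := hcof' (Submodule.span ℝ {x}) (finite_singleton x).isSeparable.span
    refine ⟨F, ?_⟩
    rw [h.range_eq F F.2]
    exact hF (Submodule.mem_span_singleton_self x)
  · have hm : Monotone fun n => (F n : Submodule ℝ X) := fun m n hmn => hF.monotone hmn
    refine ⟨⟨_, hlim (fun n => F n) (fun n => (F n).2) hm⟩, ⟨?_, fun G hG => ?_⟩, ?_⟩
    · rintro _ ⟨n, rfl⟩
      exact (le_iSup (fun n => (F n : Submodule ℝ X)) n).trans (Submodule.le_topologicalClosure _)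
    · exact Submodule.topologicalClosure_minimal _ (iSup_le fun n => hG ⟨n, rfl⟩) (hcs G G.2).1
    · rw [h.range_eq _ (hlim (fun n => F n) (fun n => (F n).2) hm),
        Submodule.topologicalClosure_coe, Submodule.coe_iSup_of_directed _ hm.directed_le]
      exact congrArg closure (iUnion_congr fun n => (h.range_eq _ (F n).2).symm)

/-- Let `X` be a real Banach space and `D ⊆ X^*` an `r`-norming subspace
(`r ≥ 1`). Then `X` has an `r`-projectional skeleton `𝔰` with `D(𝔰) = D` iff `X` has a
simple `r`-projectional skeleton `𝔰'` with `D(𝔰') = D`. -/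
theorem stmt0 {X : Type u} [NormedAddCommGroup X] [NormedSpace ℝ X] [CompleteSpace X]
    (r : ℝ) (hr : 1 ≤ r) (D : Submodule ℝ (X →L[ℝ] ℝ)) (hD : IsNormingSubspace r D) :
    (∃ (Γ : Type u) (inst : PartialOrder Γ) (P : Γ → X →L[ℝ] X),
        @IsProjSkeleton X _ _ Γ inst P ∧ (∀ s, ‖P s‖ ≤ r) ∧
        skeletonDualSet P = (D : Set (X →L[ℝ] ℝ))) ↔
    (∃ (𝓕 : Set (Submodule ℝ X)) (P : Submodule ℝ X → X →L[ℝ] X),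
        IsSimpleProjSkeleton 𝓕 P ∧ (∀ F ∈ 𝓕, ‖P F‖ ≤ r) ∧
        simpleDualSet 𝓕 P = (D : Set (X →L[ℝ] ℝ))) := by
  constructor
  · rintro ⟨Γ, inst, P, hP, hPr, hPD⟩
    obtain ⟨𝓕, i, h𝓕, hdual⟩ := hP.exists_simple
    exact ⟨𝓕, fun F => P (i F), h𝓕, fun F _ => hPr _, hdual.trans hPD⟩
  · rintro ⟨𝓕, P, hP, hPr, hPD⟩
    refine ⟨𝓕, inferInstance, fun F => P F, hP.isProjSkeleton, fun F => hPr F F.2, ?_⟩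
    rw [← hPD]
    exact iUnion_subtype (fun F => F ∈ 𝓕) fun F => range fun f : X →L[ℝ] ℝ => f.comp (P F)
end

section
/- Let X and Y be real Banach spaces and f : X → Y a function. Assume X has a fundamental minimal system or the density character of X is ℵ₁. Then there exists a rich family 𝓕 of separable subspaces of X such that for every F ∈ 𝓕 the following are equivalent: (i) the set of points of X at which f is not Fréchet differentiable is σ-upper porous in X; (ii) the set of points of F at which the restriction f↾F : F → Y is not Fréchet differentiable is σ-upper porous in F. -/
open Set TopologicalSpace Filter Metric

universe u

/-- A family `{x_i}_{i ∈ I}` of vectors in a Banach space is a fundamental minimal system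
if its closed linear span is the whole space and no `x_i` lies in the closed linear span
of the remaining vectors. -/
def IsFundamentalMinimalSystem {X : Type*} [NormedAddCommGroup X] [NormedSpace ℝ X]
    {I : Type*} (x : I → X) : Prop :=
  (Submodule.span ℝ (Set.range x)).topologicalClosure = ⊤ ∧
  ∀ i : I, x i ∉ (Submodule.span ℝ (x '' {j | j ≠ i})).topologicalClosure

section Porosity

variable {M : Type*} [MetricSpace M]

/-- `γ(x, R, A)`: the supremum of all `s ≥ 0` such that some open ball of radius `s` is
contained in `B(x, R) \ A`. -/
noncomputable def porosityGamma (x : M) (R : ℝ) (A : Set M) : ℝ :=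
  sSup {s : ℝ | 0 ≤ s ∧ ∃ z : M, Metric.ball z s ⊆ Metric.ball x R \ A}

/-- `A` is upper porous at `x` if `limsup_{R → 0+} γ(x, R, A) / R > 0`. -/
def IsUpperPorousAt (A : Set M) (x : M) : Prop :=
  0 < Filter.limsup (fun R : ℝ => porosityGamma x R A / R) (nhdsWithin 0 (Set.Ioi 0))

/-- `A` is upper porous if it is upper porous at each of its points. -/
def IsUpperPorous (A : Set M) : Prop :=
  ∀ x ∈ A, IsUpperPorousAt A x

/-- `A` is σ-upper porous if it is a countable union of upper porous sets. -/
def IsSigmaUpperPorous (A : Set M) : Prop :=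
  ∃ B : ℕ → Set M, (∀ n, IsUpperPorous (B n)) ∧ A = ⋃ n, B n

end Porosity


/-!
The set where `f` fails to be Fréchet differentiable is `G_δσ` for every map `f`: differentiability
at `x` says that for each `ε` the increments of `f` at `x` satisfy, on some ball and with some
constant `K`, the inequalities of `Q`, and each `Q f n K k` is closed (`isClosed_Q`). A rich family
is then obtained from countably many closure conditions. Sets, rather than points, are used as the
objects to be closed off: `F` is the closure of the points `x` for which `{x}` lies in a countable
family `𝒞` of subsets of `X` that is stable under a countable list of operations (`ops`).

* Choosing in `𝒞` witnesses for violations of `Q` makes `f` differentiable at `x ∈ F` as soon as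
  `f ↾ F` is (`differentiableAt_of_restrict`), so the non-differentiability set of `f ↾ F` is the
  trace on `F` of that of `f`.
* Choosing in `𝒞` the centres of holes of a fixed sequence of porous sets makes the traces of these
  sets porous in `F` (`Por.restrict`).
* For the converse, let `S` be a `G_δ` set that is not σ-porous. Since σ-porosity is a local property
  (`SP.of_local`), `S` contains a nonempty set `ker S` no nonempty open part of which is σ-porous.
  Given sets `B n` porous in `F`, one builds sets `T 0 ⊇ T 1 ⊇ ⋯` in `𝒞`, each of this kind and of
  diameter tending to `0`, whose closures meet in a point of `S ∩ F` at which no `T n` is porous.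
  At step `n` either `T (n + 1)` is kept away from `B n`, or `B n` is dense in the trace
  of `T n`; in the latter case a porosity point of `B n` would be one of `T n`. So the limit point
  is in no `B n` (`Good.not_sp_restrict`).

The hypothesis on `X` serves to make the resulting family stable under closures of increasing
unions. It provides countable sets of generators `A` for which `cs A ≤ cs B` implies `A ⊆ B`
(`GenSystem`): subsets of a minimal system, or, in density `ℵ₁`, suitable initial segments of a
dense set of order type `ω₁`.
-/

namespace SepRed

/-! ### Upper porosity and the σ-ideal it generates -/

section Por

variable {M : Type*} [MetricSpace M]

/-- `A` is upper porous at `x`, spelled out: for some `c > 0` there are arbitrarily small radii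
`R` such that `B(x, R) \ A` contains a ball of radius `c R`. -/
def Por (A : Set M) (x : M) : Prop :=
  ∃ c > 0, ∀ R₀ > 0, ∃ R, 0 < R ∧ R < R₀ ∧ ∃ z, ball z (c * R) ⊆ ball x R \ A

theorem Por.mono {A B : Set M} {x : M} (h : A ⊆ B) (hB : Por B x) : Por A x := by
  obtain ⟨c, hc, H⟩ := hB
  refine ⟨c, hc, fun R₀ hR₀ => ?_⟩
  obtain ⟨R, h1, h2, z, hz⟩ := H R₀ hR₀
  exact ⟨R, h1, h2, z, hz.trans (sdiff_subset_sdiff_right h)⟩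

theorem Por.of_inter_ball {A B : Set M} {x : M} {r : ℝ} (hr : 0 < r)
    (h : A ∩ ball x r ⊆ B) (hB : Por B x) : Por A x := by
  obtain ⟨c, hc, H⟩ := hB
  refine ⟨c, hc, fun R₀ hR₀ => ?_⟩
  obtain ⟨R, h1, h2, z, hz⟩ := H (min R₀ r) (lt_min hR₀ hr)
  refine ⟨R, h1, h2.trans_le (min_le_left _ _), z, fun w hw => ⟨(hz hw).1, fun hwA => (hz hw).2 ?_⟩⟩
  exact h ⟨hwA, ball_subset_ball (h2.le.trans (min_le_right _ _)) (hz hw).1⟩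

theorem isUpperPorousAt_iff {A : Set M} {x : M} (hx : x ∈ A) :
    IsUpperPorousAt A x ↔ Por A x := by
  -- Since `x ∈ A`, a ball avoiding `A` misses `x`, so the supremum in `porosityGamma` is genuine.
  have hle : ∀ R : ℝ, 0 < R → ∀ s ∈ {s : ℝ | 0 ≤ s ∧ ∃ z : M, ball z s ⊆ ball x R \ A}, s ≤ R := by
    rintro R hR s ⟨hs, z, hz⟩
    rcases hs.eq_or_lt with rfl | hs
    · exact hR.le
    · have h1 := (hz (mem_ball_self hs)).1
      have h2 : x ∉ ball z s := fun h => (hz h).2 hx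
      rw [mem_ball] at h1 h2
      rw [dist_comm] at h2
      linarith [not_lt.1 h2]
  have hbdd : ∀ R : ℝ, 0 < R → BddAbove {s : ℝ | 0 ≤ s ∧ ∃ z : M, ball z s ⊆ ball x R \ A} :=
    fun R hR => ⟨R, hle R hR⟩
  have h0 : ∀ R : ℝ, (0 : ℝ) ∈ {s : ℝ | 0 ≤ s ∧ ∃ z : M, ball z s ⊆ ball x R \ A} :=
    fun R => ⟨le_rfl, x, by simp⟩
  have hub : ∀ R : ℝ, 0 < R → porosityGamma x R A / R ≤ 1 := fun R hR => by
    rw [div_le_one hR]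
    exact csSup_le ⟨0, h0 R⟩ (hle R hR)
  have hlb : ∀ R : ℝ, 0 < R → 0 ≤ porosityGamma x R A / R := fun R hR =>
    div_nonneg (le_csSup (hbdd R hR) (h0 R)) hR.le
  have hB : IsBoundedUnder (· ≤ ·) (nhdsWithin 0 (Ioi 0)) fun R : ℝ => porosityGamma x R A / R :=
    isBoundedUnder_of_eventually_le (a := 1)
      (eventually_nhdsWithin_of_forall fun R hR => hub R hR)
  have hC : IsCoboundedUnder (· ≤ ·) (nhdsWithin 0 (Ioi 0))
      fun R : ℝ => porosityGamma x R A / R := by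
    have : IsBoundedUnder (· ≥ ·) (nhdsWithin 0 (Ioi 0)) fun R : ℝ => porosityGamma x R A / R :=
      isBoundedUnder_of_eventually_ge (a := 0)
        (eventually_nhdsWithin_of_forall fun R hR => hlb R hR)
    exact this.isCoboundedUnder_le
  unfold IsUpperPorousAt
  constructor
  · intro h
    obtain ⟨c, hc, hc'⟩ := exists_between h
    have hf := frequently_lt_of_lt_limsup hC hc'
    refine ⟨c, hc, fun R₀ hR₀ => ?_⟩
    obtain ⟨R, hR, hR1, hR2⟩ := (hf.and_eventually (Ioo_mem_nhdsGT hR₀)).exists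
    rw [lt_div_iff₀ hR1] at hR
    obtain ⟨s, ⟨-, z, hz⟩, hs⟩ := exists_lt_of_lt_csSup ⟨0, h0 R⟩ hR
    exact ⟨R, hR1, hR2, z, (ball_subset_ball hs.le).trans hz⟩
  · rintro ⟨c, hc, H⟩
    refine hc.trans_le (le_limsup_of_frequently_le ?_ hB)
    rw [(nhdsGT_basis (0 : ℝ)).frequently_iff]
    intro R₀ hR₀
    obtain ⟨R, h1, h2, z, hz⟩ := H R₀ hR₀
    refine ⟨R, ⟨h1, h2⟩, ?_⟩
    rw [le_div_iff₀ h1]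
    exact le_csSup (hbdd R h1) ⟨by positivity, z, hz⟩

/-- `A` is covered by countably many upper porous sets. -/
def SP (A : Set M) : Prop :=
  ∃ B : ℕ → Set M, (∀ n, ∀ x ∈ B n, Por (B n) x) ∧ A ⊆ ⋃ n, B n

theorem isSigmaUpperPorous_iff {A : Set M} : IsSigmaUpperPorous A ↔ SP A := by
  constructor
  · rintro ⟨B, hB, rfl⟩
    exact ⟨B, fun n x hx => (isUpperPorousAt_iff hx).1 (hB n x hx), subset_rfl⟩
  · rintro ⟨B, hB, hA⟩
    refine ⟨fun n => B n ∩ A, fun n x hx => (isUpperPorousAt_iff hx).2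
      ((hB n x hx.1).mono inter_subset_left), ?_⟩
    rw [← iUnion_inter, inter_eq_right.2 hA]

theorem SP.mono {A B : Set M} (h : A ⊆ B) : SP B → SP A
  | ⟨C, hC, hB⟩ => ⟨C, hC, h.trans hB⟩

theorem SP.of_countable {ι : Type*} [Countable ι] {A : Set M} (B : ι → Set M)
    (hB : ∀ i, ∀ x ∈ B i, Por (B i) x) (hA : A ⊆ ⋃ i, B i) : SP A := by
  cases isEmpty_or_nonempty ι
  · refine ⟨fun _ => ∅, by simp, ?_⟩
    simpa using hA
  · obtain ⟨g, hg⟩ := exists_surjective_nat ι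
    refine ⟨fun n => B (g n), fun n => hB _, ?_⟩
    rwa [hg.iUnion_comp B]

theorem SP.iUnion {ι : Type*} [Countable ι] {A : ι → Set M} (h : ∀ i, SP (A i)) :
    SP (⋃ i, A i) := by
  choose B hB hA using h
  refine SP.of_countable (fun p : ι × ℕ => B p.1 p.2) (fun p => hB p.1 p.2) ?_
  refine iUnion_subset fun i => (hA i).trans (iUnion_subset fun n => ?_)
  exact subset_iUnion (fun p : ι × ℕ => B p.1 p.2) (i, n)

theorem SP.union {A B : Set M} (hA : SP A) (hB : SP B) : SP (A ∪ B) := by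
  rw [union_eq_iUnion]
  exact SP.iUnion (by rintro (_ | _) <;> assumption)

/-- σ-porosity is a local property, also in nonseparable spaces. Well-order a cover by open sets
on which `A` is σ-porous, and let `A n` be the points `x` whose `1/n`-ball lies in the first
member containing `x`. Points of `A n` closer than `1/n` have the same first member, so porous
pieces taken from different members do not interfere. -/
theorem SP.of_local {A : Set M}
    (h : ∀ x ∈ A, ∃ U : Set M, IsOpen U ∧ x ∈ U ∧ SP (A ∩ U)) : SP A := by
  classical
  choose! U hUo hxU hU using h
  let r : M → M → Prop := WellOrderingRel
  have wf : WellFounded r := (inferInstance : IsWellOrder M WellOrderingRel).wf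
  have hne : ∀ x ∈ A, {y | y ∈ A ∧ x ∈ U y}.Nonempty := fun x hx => ⟨x, hx, hxU x hx⟩
  let i : M → M := fun x => if hx : x ∈ A then wf.min _ (hne x hx) else x
  have hi : ∀ x ∈ A, i x ∈ A ∧ x ∈ U (i x) := fun x hx => by
    simp only [i, dif_pos hx]
    exact wf.min_mem _ (hne x hx)
  have hmin : ∀ x ∈ A, ∀ y ∈ A, x ∈ U y → ¬ r y (i x) := fun x hx y hy hxy => by
    simp only [i, dif_pos hx]
    exact wf.not_lt_min _ (show y ∈ {y | y ∈ A ∧ x ∈ U y} from ⟨hy, hxy⟩)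
  choose! B hB hAB using hU
  refine SP.of_countable (fun p : ℕ × ℕ => {x | x ∈ A ∧ ball x (1 / ((p.1 : ℝ) + 1)) ⊆ U (i x) ∧
    x ∈ B (i x) p.2}) ?_ ?_
  · rintro ⟨n, k⟩ x ⟨hxA, hxn, hxk⟩
    have hpos : (0 : ℝ) < 1 / ((n : ℝ) + 1) := by positivity
    refine Por.of_inter_ball hpos ?_ (hB (i x) (hi x hxA).1 k x hxk)
    rintro y ⟨⟨hyA, hyn, hyk⟩, hyx⟩
    have h1 : ¬ r (i x) (i y) := hmin y hyA _ (hi x hxA).1 (hxn hyx)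
    have h2 : ¬ r (i y) (i x) := hmin x hxA _ (hi y hyA).1 (hyn (mem_ball_comm.1 hyx))
    have h3 : i x = i y := by
      rcases trichotomous_of WellOrderingRel (i x) (i y) with h | h | h
      · exact absurd h h1
      · exact h
      · exact absurd h h2
    rw [h3]
    exact hyk
  · intro x hx
    obtain ⟨ε, hε, hball⟩ := Metric.isOpen_iff.1 (hUo _ (hi x hx).1) x (hi x hx).2
    obtain ⟨n, hn⟩ := exists_nat_one_div_lt hε
    obtain ⟨k, hk⟩ := mem_iUnion.1
      (hAB (i x) (hi x hx).1 (show x ∈ A ∩ U (i x) from ⟨hx, (hi x hx).2⟩))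
    exact mem_iUnion.2 ⟨(n, k), hx, (ball_subset_ball hn.le).trans hball, hk⟩

/-- The points of `T` near which `T` is nowhere σ-porous. -/
def ker (T : Set M) : Set M :=
  {x | x ∈ T ∧ ∀ U : Set M, IsOpen U → x ∈ U → ¬ SP (T ∩ U)}

/-- Every nonempty relatively open part of `T` fails to be σ-porous. -/
def Full (T : Set M) : Prop :=
  ∀ x ∈ T, ∀ U : Set M, IsOpen U → x ∈ U → ¬ SP (T ∩ U)

theorem ker_subset (T : Set M) : ker T ⊆ T := fun _ hx => hx.1

theorem sp_diff_ker (T : Set M) : SP (T \ ker T) := by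
  refine SP.of_local fun x hx => ?_
  have h := hx.2
  simp only [ker, mem_ofPred_eq, not_and, not_forall, not_not] at h
  obtain ⟨U, hU, hxU, hs⟩ := h hx.1
  exact ⟨U, hU, hxU, hs.mono (inter_subset_inter_left _ sdiff_subset)⟩

theorem full_ker (T : Set M) : Full (ker T) := by
  intro x hx U hU hxU hs
  refine hx.2 U hU hxU ((hs.union (sp_diff_ker T)).mono fun y hy => ?_)
  by_cases h : y ∈ ker T
  · exact Or.inl ⟨h, hy.2⟩
  · exact Or.inr ⟨hy.1, h⟩

theorem ker_nonempty {T : Set M} (h : ¬ SP T) : (ker T).Nonempty := by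
  by_contra hne
  rw [not_nonempty_iff_eq_empty] at hne
  exact h (by simpa [hne] using sp_diff_ker T)

theorem Full.inter_open {T U : Set M} (h : Full T) (hU : IsOpen U) : Full (T ∩ U) :=
  fun x hx V hV hxV => by
    rw [inter_assoc]
    exact h x hx.1 _ (hU.inter hV) ⟨hx.2, hxV⟩

theorem Full.not_sp {T : Set M} (h : Full T) (hne : T.Nonempty) : ¬ SP T := by
  obtain ⟨x, hx⟩ := hne
  simpa using h x hx univ isOpen_univ trivial

/-- The points at which `T` has no holes of relative size `1/(n+1)` at scales below `1/(k+1)`. -/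
def thick (T : Set M) (n k : ℕ) : Set M :=
  {x | ∀ R : ℝ, 0 < R → R < 1 / ((k : ℝ) + 1) → ∀ z : M,
    ¬ ball z (1 / ((n : ℝ) + 1) * R) ⊆ ball x R \ T}

/-- The points of `T` at which `T` is porous form a porous set; the remaining points lie in
`⋃ k, thick T n k` for each `n`. -/
theorem exists_thick {T : Set M} (h : ¬ SP T) (n : ℕ) : ∃ k, ¬ SP (T ∩ thick T n k) := by
  by_contra! hk
  refine h (((SP.iUnion hk).union (B := {x | x ∈ T ∧ Por T x}) ?_).mono fun x hx => ?_)
  · exact SP.of_countable (fun _ : Unit => {x | x ∈ T ∧ Por T x})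
      (fun _ x hx => hx.2.mono fun y hy => hy.1)
      (subset_iUnion (fun _ : Unit => {x | x ∈ T ∧ Por T x}) ())
  · by_cases hp : Por T x
    · exact Or.inr ⟨hx, hp⟩
    · refine Or.inl ?_
      by_contra hnot
      refine hp ⟨1 / ((n : ℝ) + 1), by positivity, fun R₀ hR₀ => ?_⟩
      obtain ⟨k, hkR⟩ := exists_nat_one_div_lt hR₀
      have : x ∉ thick T n k := fun h' => hnot (mem_iUnion.2 ⟨k, hx, h'⟩)
      simp only [thick, mem_ofPred_eq, not_forall, not_not] at this
      obtain ⟨R, h1, h2, z, hz⟩ := this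
      exact ⟨R, h1, h2.trans hkR, z, hz⟩

/-- Thickness with constants depending on `n` survives, up to a factor `2`, in limits. -/
theorem not_por_of_closure_thick {T : Set M} {x : M}
    (h : ∀ N, ∃ n ≥ N, ∃ k, x ∈ closure (thick T n k)) : ¬ Por T x := by
  rintro ⟨c, hc, H⟩
  obtain ⟨N, hN⟩ := exists_nat_one_div_lt (half_pos hc)
  obtain ⟨n, hn, k, hx⟩ := h N
  have hnc : 1 / ((n : ℝ) + 1) * 2 ≤ c := by
    have : 1 / ((n : ℝ) + 1) ≤ 1 / ((N : ℝ) + 1) := by gcongr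
    linarith
  obtain ⟨R, h1, h2, z, hz⟩ := H (1 / ((k : ℝ) + 1) / 2) (by positivity)
  obtain ⟨y, hy, hxy⟩ := Metric.mem_closure_iff.1 hx R h1
  refine hy (2 * R) (by positivity) (by linarith) z fun w hw => ?_
  have hw' : w ∈ ball z (c * R) := ball_subset_ball (by nlinarith) hw
  refine ⟨?_, (hz hw').2⟩
  have := (hz hw').1
  rw [mem_ball] at this ⊢
  linarith [dist_triangle w x y]

theorem thick_mono {T T' : Set M} (h : T ⊆ T') (n k : ℕ) : thick T n k ⊆ thick T' n k :=
  fun _ hx R h1 h2 z hz => hx R h1 h2 z (hz.trans (sdiff_subset_sdiff_right h))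

end Por

/-! ### Differentiability of an arbitrary map, expressed without derivatives -/

section Diff

variable {X : Type*} [NormedAddCommGroup X] [NormedSpace ℝ X]
  {Y : Type*} [NormedAddCommGroup Y] [NormedSpace ℝ Y]

/-- The points near which, at scales below `1/(k+1)`, the increments of `f` respect linear
relations between three increments of the argument, with relative error `1/(n+1)` and with
inexact relations penalised by the factor `K`. -/
def Q (f : X → Y) (n K k : ℕ) : Set X :=
  {x | ∀ (a : Fin 3 → ℝ) (y : Fin 3 → X), (∀ i, ‖y i - x‖ < 1 / ((k : ℝ) + 1)) →
    ‖∑ i, a i • (f (y i) - f x)‖ ≤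
      K * ‖∑ i, a i • (y i - x)‖ + 1 / ((n : ℝ) + 1) * ∑ i, |a i| * ‖y i - x‖}

theorem mem_Q_of_hasFDerivAt {f : X → Y} {x : X} {T : X →L[ℝ] Y} (h : HasFDerivAt f T x) (n : ℕ) :
    ∃ K k : ℕ, x ∈ Q f n K k := by
  have hε : (0 : ℝ) < 1 / ((n : ℝ) + 1) := by positivity
  obtain ⟨δ, hδ, hb⟩ := Metric.eventually_nhds_iff.1 (h.isLittleO.def hε)
  obtain ⟨K, hK⟩ := exists_nat_ge ‖T‖
  obtain ⟨k, hk⟩ := exists_nat_one_div_lt hδ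
  refine ⟨K, k, fun a y hy => ?_⟩
  have e : ∑ i, a i • (f (y i) - f x) =
      T (∑ i, a i • (y i - x)) + ∑ i, a i • (f (y i) - f x - T (y i - x)) := by
    rw [map_sum, ← Finset.sum_add_distrib]
    refine Finset.sum_congr rfl fun i _ => ?_
    rw [map_smul, ← smul_add, add_sub_cancel]
  rw [e]
  refine (norm_add_le _ _).trans (add_le_add ?_ ?_)
  · exact (T.le_opNorm _).trans (by gcongr)
  · rw [Finset.mul_sum]
    refine (norm_sum_le _ _).trans (Finset.sum_le_sum fun i _ => ?_)
    rw [norm_smul, Real.norm_eq_abs]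
    have := hb (y := y i) (by rw [dist_eq_norm]; exact (hy i).trans hk)
    calc |a i| * ‖f (y i) - f x - T (y i - x)‖
        ≤ |a i| * (1 / ((n : ℝ) + 1) * ‖y i - x‖) := by gcongr
      _ = _ := by ring

/-- Conversely, the relations force the difference quotients to converge, uniformly on the unit
ball, to a map that is linear (from the exact relations) and bounded (from a single increment). -/
theorem differentiableAt_of_mem_Q [CompleteSpace Y] {f : X → Y} {x : X}
    (h : ∀ n, ∃ K k : ℕ, x ∈ Q f n K k) : DifferentiableAt ℝ f x := by
  let q : X → ℕ → Y := fun v m => ((m : ℝ) + 1) • (f (x + ((m : ℝ) + 1)⁻¹ • v) - f x)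
  -- the estimate of `Q`, for rescaled increments
  have key : ∀ ε > 0, ∃ K : ℕ, ∃ δ > 0, ∀ (a s : Fin 3 → ℝ) (v : Fin 3 → X), (∀ i, 0 < s i) →
      (∀ i, ‖s i • v i‖ < δ) →
      ‖∑ i, a i • (s i)⁻¹ • (f (x + s i • v i) - f x)‖ ≤
        K * ‖∑ i, a i • v i‖ + ε * ∑ i, |a i| * ‖v i‖ := by
    intro ε hε
    obtain ⟨n, hn⟩ := exists_nat_one_div_lt hε
    obtain ⟨K, k, hx⟩ := h n
    refine ⟨K, 1 / ((k : ℝ) + 1), by positivity, fun a s v hs hv => ?_⟩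
    have := hx (fun i => a i * (s i)⁻¹) (fun i => x + s i • v i) (by simpa using hv)
    have e1 : ∀ i, |a i * (s i)⁻¹| * ‖s i • v i‖ = |a i| * ‖v i‖ := fun i => by
      have := (hs i).ne'
      rw [abs_mul, norm_smul, Real.norm_eq_abs, abs_inv]
      have : |s i| ≠ 0 := abs_ne_zero.2 this
      field_simp
    have e2 : ∀ i, (a i * (s i)⁻¹) • s i • v i = a i • v i := fun i => by
      rw [smul_smul, mul_assoc, inv_mul_cancel₀ (hs i).ne', mul_one]
    simp only [add_sub_cancel_left, e1, e2, mul_smul (a _) ((s _)⁻¹) (_ - _ : Y)] at this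
    refine this.trans ?_
    gcongr
  have hsmall : ∀ δ > 0, ∀ v : X, ∀ᶠ m : ℕ in atTop, ‖((m : ℝ) + 1)⁻¹ • v‖ < δ := by
    intro δ hδ v
    have h1 : Tendsto (fun m : ℕ => ((m : ℝ) + 1)⁻¹ • v) atTop (nhds ((0 : ℝ) • v)) := by
      have := tendsto_one_div_add_atTop_nhds_zero_nat (𝕜 := ℝ)
      simp only [one_div] at this
      exact this.smul_const v
    rw [zero_smul] at h1
    simpa using h1.norm.eventually (gt_mem_nhds (by simpa using hδ))
  have hpos : ∀ m : ℕ, (0 : ℝ) < ((m : ℝ) + 1)⁻¹ := fun m => by positivity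
  have hcau : ∀ v, CauchySeq (q v) := by
    intro v
    rw [Metric.cauchySeq_iff]
    intro ε hε
    obtain ⟨K, δ, hδ, H⟩ := key (ε / (2 * ‖v‖ + 1)) (by positivity)
    obtain ⟨N, hN⟩ := eventually_atTop.1 (hsmall δ hδ v)
    refine ⟨N, fun m hm l hl => ?_⟩
    have := H ![1, -1, 0] ![((m : ℝ) + 1)⁻¹, ((l : ℝ) + 1)⁻¹, 1] ![v, v, 0]
      (by intro i; fin_cases i <;> simp <;> positivity)
      (by intro i; fin_cases i <;> simp [hδ] <;> [simpa using hN m hm; simpa using hN l hl])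
    simp [Fin.sum_univ_three] at this
    rw [dist_eq_norm]
    have e : q v m - q v l = ((m : ℝ) + 1) • (f (x + ((m : ℝ) + 1)⁻¹ • v) - f x) +
      -(((l : ℝ) + 1) • (f (x + ((l : ℝ) + 1)⁻¹ • v) - f x)) := by simp [q, sub_eq_add_neg]
    rw [e]
    refine this.trans_lt ?_
    rw [div_mul_eq_mul_div, div_lt_iff₀ (by positivity)]
    nlinarith [norm_nonneg v]
  choose L hL using fun v => cauchySeq_tendsto_of_complete (hcau v)
  -- exact linear relations pass to the limit without error
  have hrel : ∀ (a : Fin 3 → ℝ) (v : Fin 3 → X), ∑ i, a i • v i = 0 → ∑ i, a i • L (v i) = 0 := by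
    intro a v hav
    have hlim : Tendsto (fun m => ‖∑ i, a i • q (v i) m‖) atTop (nhds ‖∑ i, a i • L (v i)‖) :=
      (tendsto_finsetSum _ fun i _ => (hL (v i)).const_smul (a i)).norm
    rw [← norm_le_zero_iff]
    refine le_of_forall_pos_le_add fun ε hε => ?_
    have hS : 0 ≤ ∑ i, |a i| * ‖v i‖ := Finset.sum_nonneg fun i _ => by positivity
    obtain ⟨K, δ, hδ, H⟩ := key (ε / (∑ i, |a i| * ‖v i‖ + 1)) (by positivity)
    refine le_of_tendsto hlim ?_
    filter_upwards [eventually_all.2 fun i => hsmall δ hδ (v i)] with m hm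
    have := H a (fun _ => ((m : ℝ) + 1)⁻¹) v (fun _ => hpos m) hm
    simp only [hav, norm_zero, mul_zero, zero_add, inv_inv] at this
    refine this.trans ?_
    rw [div_mul_eq_mul_div, div_le_iff₀ (by positivity)]
    nlinarith
  have hadd : ∀ v w, L (v + w) = L v + L w := fun v w => by
    have := hrel ![1, -1, -1] ![v + w, v, w] (by simp [Fin.sum_univ_three])
    simp [Fin.sum_univ_three] at this
    rw [← sub_eq_zero, ← this]
    abel
  have hsmul : ∀ (r : ℝ) v, L (r • v) = r • L v := fun r v => by
    have := hrel ![1, -r, 0] ![r • v, v, 0] (by simp [Fin.sum_univ_three])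
    simp [Fin.sum_univ_three] at this
    rw [← sub_eq_zero, ← this]
    abel
  obtain ⟨C, hC⟩ : ∃ C, ∀ v, ‖L v‖ ≤ C * ‖v‖ := by
    obtain ⟨K, δ, hδ, H⟩ := key 1 one_pos
    refine ⟨K + 1, fun v => le_of_tendsto (hL v).norm ?_⟩
    filter_upwards [hsmall δ hδ v] with m hm
    have := H ![1, 0, 0] ![((m : ℝ) + 1)⁻¹, 1, 1] ![v, 0, 0]
      (by intro i; fin_cases i <;> simp <;> positivity)
      (by intro i; fin_cases i <;> simp [hδ]; simpa using hm)
    simp [Fin.sum_univ_three] at this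
    simp only [q]
    linarith
  let T : X →L[ℝ] Y := LinearMap.mkContinuous
    { toFun := L, map_add' := hadd, map_smul' := hsmul } C hC
  refine HasFDerivAt.differentiableAt (f' := T) ?_
  rw [hasFDerivAt_iff_isLittleO_nhds_zero, Asymptotics.isLittleO_iff]
  intro ε hε
  obtain ⟨K, δ, hδ, H⟩ := key (ε / 2) (by positivity)
  filter_upwards [Metric.ball_mem_nhds (0 : X) hδ] with v hv
  rw [mem_ball_zero_iff] at hv
  have hlim : Tendsto (fun m => ‖f (x + v) - f x - q v m‖) atTop
      (nhds ‖f (x + v) - f x - T v‖) := ((hL v).const_sub _).norm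
  refine le_of_tendsto hlim ?_
  filter_upwards [hsmall δ hδ v] with m hm
  have := H ![1, -1, 0] ![1, ((m : ℝ) + 1)⁻¹, 1] ![v, v, 0]
    (by intro i; fin_cases i <;> simp <;> positivity)
    (by intro i; fin_cases i <;> simp [hδ] <;> [exact hv; simpa using hm])
  simp [Fin.sum_univ_three] at this
  rw [sub_eq_add_neg (f (x + v) - f x)]
  simp only [q]
  linarith

theorem differentiableAt_iff_mem_Q [CompleteSpace Y] {f : X → Y} {x : X} :
    DifferentiableAt ℝ f x ↔ ∀ n, ∃ K k : ℕ, x ∈ Q f n K k :=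
  ⟨fun h n => mem_Q_of_hasFDerivAt h.hasFDerivAt n, differentiableAt_of_mem_Q⟩

/-- On `Q f n K k` the map `f` is continuous up to limit points, because the point itself may be
used as an increment. -/
theorem isClosed_Q (f : X → Y) (n K k : ℕ) : IsClosed (Q f n K k) := by
  refine isClosed_of_closure_subset fun x hx a y hy => ?_
  rw [mem_closure_iff_seq_limit] at hx
  obtain ⟨u, hu, hux⟩ := hx
  have hk : (0 : ℝ) < 1 / ((k : ℝ) + 1) := by positivity
  have hfu : Tendsto (fun j => f (u j)) atTop (nhds (f x)) := by
    have h0 : Tendsto (fun j => ‖x - u j‖) atTop (nhds 0) := by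
      simpa using (hux.const_sub x).norm
    have hle : ∀ᶠ j in atTop, ‖f (u j) - f x‖ ≤ (K + 1 / ((n : ℝ) + 1)) * ‖x - u j‖ := by
      filter_upwards [h0.eventually (gt_mem_nhds hk)] with j hj
      have := hu j ![1, 0, 0] ![x, u j, u j]
        (by intro i; fin_cases i <;> simp [Nat.cast_add_one_pos]; simpa using hj)
      simp [Fin.sum_univ_three] at this
      rw [norm_sub_rev]
      simp only [one_div]
      linarith
    rw [tendsto_iff_norm_sub_tendsto_zero]
    refine squeeze_zero' (Eventually.of_forall fun _ => norm_nonneg _) hle ?_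
    simpa using h0.const_mul (K + 1 / ((n : ℝ) + 1))
  have hev : ∀ᶠ j in atTop, ∀ i, ‖y i - u j‖ < 1 / ((k : ℝ) + 1) :=
    eventually_all.2 fun i => (hux.const_sub (y i)).norm.eventually (gt_mem_nhds (hy i))
  refine le_of_tendsto_of_tendsto (b := atTop)
    (f := fun j => ‖∑ i, a i • (f (y i) - f (u j))‖)
    (g := fun j => K * ‖∑ i, a i • (y i - u j)‖ + 1 / ((n : ℝ) + 1) * ∑ i, |a i| * ‖y i - u j‖)
    ?_ ?_ ?_
  · exact (tendsto_finsetSum _ fun i _ => (hfu.const_sub (f (y i))).const_smul (a i)).norm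
  · exact ((tendsto_finsetSum _ fun i _ => (hux.const_sub (y i)).const_smul (a i)).norm.const_mul
      _).add ((tendsto_finsetSum _ fun i _ => (hux.const_sub (y i)).norm.const_mul _).const_mul _)
  · filter_upwards [hev] with j hj using hu j a y hj

/-- A strict violation of the inequality defining `Q` at `x`, with room `1/(l+1)` for moving `x`,
and with rational coefficients. -/
def Viol (f : X → Y) (a : Fin 3 → ℚ) (K n k l : ℕ) (x : X) (y : Fin 3 → X) : Prop :=
  (∀ i, ‖y i - x‖ < 1 / ((k : ℝ) + 1)) ∧
    K * ‖∑ i, (a i : ℝ) • (y i - x)‖ + 1 / ((n : ℝ) + 1) *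
      (∑ i, |(a i : ℝ)| * ‖y i - x‖ + 1 / ((l : ℝ) + 1) * ∑ i, |(a i : ℝ)|) <
    ‖∑ i, (a i : ℝ) • (f (y i) - f x)‖

/-- If violations of the differentiability criterion at points of a dense subset `D` of `E` can be
found inside `E`, then differentiability of `f` along `E` implies differentiability of `f`. -/
theorem differentiableAt_of_restrict [CompleteSpace Y] {f : X → Y} {E : Submodule ℝ X} {D : Set X}
    (hDE : D ⊆ E) (hED : (E : Set X) ⊆ closure D)
    (hV : ∀ x ∈ D, ∀ (a : Fin 3 → ℚ) (K n k l : ℕ), (∃ y, Viol f a K n k l x y) →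
      ∃ y, (∀ i, y i ∈ E) ∧ Viol f a K n k l x y)
    (x : E) (hx : DifferentiableAt ℝ (fun z : E => f z) x) : DifferentiableAt ℝ f x := by
  by_contra hnd
  simp only [differentiableAt_iff_mem_Q, not_forall, not_exists] at hnd
  obtain ⟨n, hn⟩ := hnd
  obtain ⟨T, hT⟩ := hx
  obtain ⟨K, hK⟩ := exists_nat_ge ‖T‖
  have hε : (0 : ℝ) < 1 / ((n : ℝ) + 1) / 2 := by positivity
  obtain ⟨δ, hδ, hb⟩ := Metric.eventually_nhds_iff.1 (hT.isLittleO.def hε)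
  obtain ⟨k, hk⟩ := exists_nat_one_div_lt (half_pos hδ)
  have hviol := hn K k
  simp only [Q, mem_ofPred_eq, not_forall, not_le] at hviol
  obtain ⟨a, y, hy, hlt⟩ := hviol
  -- rational coefficients
  obtain ⟨b, hb'⟩ : ∃ b : Fin 3 → ℚ,
      K * ‖∑ i, (b i : ℝ) • (y i - x)‖ + 1 / ((n : ℝ) + 1) * ∑ i, |(b i : ℝ)| * ‖y i - x‖ <
        ‖∑ i, (b i : ℝ) • (f (y i) - f x)‖ := by
    have hd : DenseRange (fun b : Fin 3 → ℚ => fun i => (b i : ℝ)) :=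
      DenseRange.piMap fun _ => Rat.denseRange_cast
    have ho : IsOpen {a : Fin 3 → ℝ |
        K * ‖∑ i, a i • (y i - (x : X))‖ + 1 / ((n : ℝ) + 1) * ∑ i, |a i| * ‖y i - x‖ <
          ‖∑ i, a i • (f (y i) - f x)‖} :=
      isOpen_lt (by fun_prop) (by fun_prop)
    exact hd.exists_mem_open ho ⟨a, hlt⟩
  -- room for moving the base point
  obtain ⟨l, hl⟩ : ∃ l : ℕ, K * ‖∑ i, (b i : ℝ) • (y i - x)‖ + 1 / ((n : ℝ) + 1) *
      (∑ i, |(b i : ℝ)| * ‖y i - x‖ + 1 / ((l : ℝ) + 1) * ∑ i, |(b i : ℝ)|) <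
        ‖∑ i, (b i : ℝ) • (f (y i) - f x)‖ := by
    have h1 : Tendsto (fun l : ℕ => K * ‖∑ i, (b i : ℝ) • (y i - x)‖ + 1 / ((n : ℝ) + 1) *
      (∑ i, |(b i : ℝ)| * ‖y i - x‖ + 1 / ((l : ℝ) + 1) * ∑ i, |(b i : ℝ)|)) atTop
      (nhds (K * ‖∑ i, (b i : ℝ) • (y i - x)‖ + 1 / ((n : ℝ) + 1) *
      (∑ i, |(b i : ℝ)| * ‖y i - x‖ + 0 * ∑ i, |(b i : ℝ)|))) :=
      (((tendsto_one_div_add_atTop_nhds_zero_nat.mul_const _).const_add _).const_mul _).const_add _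
    rw [zero_mul, add_zero] at h1
    exact (h1.eventually (gt_mem_nhds hb')).exists
  have : (nhdsWithin (x : X) D).NeBot := mem_closure_iff_nhdsWithin_neBot.1 (hED x.2)
  have hid : Tendsto (fun z : X => z) (nhdsWithin (x : X) D) (nhds (x : X)) :=
    tendsto_id.mono_left nhdsWithin_le_nhds
  have hfc : Tendsto f (nhdsWithin (x : X) D) (nhds (f x)) := by
    have h1 : ContinuousWithinAt f (E : Set X) (x : X) := by
      rw [continuousWithinAt_iff_continuousAt_domRestrict f x.2]
      exact hT.continuousAt
    exact h1.mono hDE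
  have hev1 : ∀ᶠ z in nhdsWithin (x : X) D, ∀ i, ‖y i - z‖ < 1 / ((k : ℝ) + 1) :=
    eventually_all.2 fun i => (hid.const_sub (y i)).norm.eventually (gt_mem_nhds (hy i))
  have hev2 : ∀ᶠ z in nhdsWithin (x : X) D, K * ‖∑ i, (b i : ℝ) • (y i - z)‖ +
      1 / ((n : ℝ) + 1) *
      (∑ i, |(b i : ℝ)| * ‖y i - z‖ + 1 / ((l : ℝ) + 1) * ∑ i, |(b i : ℝ)|) <
        ‖∑ i, (b i : ℝ) • (f (y i) - f z)‖ := by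
    refine Tendsto.eventually_lt ?_ ?_ hl
    · exact ((tendsto_finsetSum _ fun i _ => (hid.const_sub (y i)).const_smul _).norm.const_mul
        _).add (((tendsto_finsetSum _ fun i _ => (hid.const_sub (y i)).norm.const_mul
          _).add_const _).const_mul _)
    · exact (tendsto_finsetSum _ fun i _ => (hfc.const_sub (f (y i))).const_smul _).norm
  have hev3 : ∀ r > 0, ∀ᶠ z : X in nhdsWithin (x : X) D, ‖z - (x : X)‖ < r := fun r hr => by
    have := (hid.sub_const (x : X)).norm
    rw [sub_self, norm_zero] at this
    exact this.eventually (gt_mem_nhds hr)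
  have hk0 : (0 : ℝ) < 1 / ((k : ℝ) + 1) := by positivity
  have hl0 : (0 : ℝ) < 1 / ((l : ℝ) + 1) := by positivity
  obtain ⟨z, hz1, hz2, hz3, hz4, hzD⟩ := (hev1.and (hev2.and ((hev3 _ hk0).and
    ((hev3 _ hl0).and self_mem_nhdsWithin)))).exists
  obtain ⟨w, hwE, hw1, hw2⟩ := hV z hzD b K n k l ⟨y, hz1, hz2⟩
  refine absurd hw2 (not_lt.2 ?_)
  -- errors of the linear approximation along `E` with centre `x`
  have herr : ∀ u (hu : u ∈ E), ‖u - x‖ < δ →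
      ‖f u - f x - T (⟨u, hu⟩ - x)‖ ≤ 1 / ((n : ℝ) + 1) / 2 * ‖u - x‖ := fun u hu hux => by
    have := hb (y := ⟨u, hu⟩) (by rw [dist_eq_norm]; exact hux)
    exact this
  have hzE := hDE hzD
  have hez := herr z hzE (by linarith)
  have hwx : ∀ i, ‖w i - x‖ ≤ ‖w i - z‖ + ‖z - x‖ := fun i => norm_sub_le_norm_sub_add_norm_sub _ _ _
  have hew := fun i => herr (w i) (hwE i) (by linarith [hwx i, hw1 i])
  let w' : Fin 3 → E := fun i => ⟨w i, hwE i⟩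
  let z' : E := ⟨z, hzE⟩
  have e : ∑ i, (b i : ℝ) • (f (w i) - f z) = T (∑ i, (b i : ℝ) • (w' i - z')) +
      ∑ i, (b i : ℝ) • ((f (w i) - f x - T (w' i - x)) - (f z - f x - T (z' - x))) := by
    rw [map_sum, ← Finset.sum_add_distrib]
    refine Finset.sum_congr rfl fun i _ => ?_
    rw [map_smul, ← smul_add, map_sub, map_sub, map_sub]
    congr 1
    abel
  have en : ‖∑ i, (b i : ℝ) • (w' i - z')‖ = ‖∑ i, (b i : ℝ) • (w i - z)‖ := by
    have : ((∑ i, (b i : ℝ) • (w' i - z') : E) : X) = ∑ i, (b i : ℝ) • (w i - z) := by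
      simp [w', z']
    rw [← this, Submodule.coe_norm]
  rw [e]
  refine (norm_add_le _ _).trans (add_le_add ?_ ?_)
  · refine (T.le_opNorm _).trans ?_
    rw [en]
    gcongr
  · rw [Finset.mul_sum, ← Finset.sum_add_distrib, Finset.mul_sum]
    refine (norm_sum_le _ _).trans (Finset.sum_le_sum fun i _ => ?_)
    rw [norm_smul, Real.norm_eq_abs]
    have h1 : ‖(f (w i) - f x - T (w' i - x)) - (f z - f x - T (z' - x))‖ ≤
        1 / ((n : ℝ) + 1) * (‖w i - z‖ + 1 / ((l : ℝ) + 1)) := by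
      refine (norm_sub_le _ _).trans ((add_le_add (hew i) hez).trans ?_)
      have hh : ‖w i - x‖ + ‖z - x‖ ≤ 2 * (‖w i - z‖ + 1 / ((l : ℝ) + 1)) := by
        linarith [hwx i, norm_nonneg (w i - z)]
      nlinarith
    calc _ ≤ |(b i : ℝ)| * (1 / ((n : ℝ) + 1) * (‖w i - z‖ + 1 / ((l : ℝ) + 1))) := by gcongr
      _ = _ := by ring

end Diff

/-! ### Transfer of porosity between the space and a subspace -/

section Transfer

variable {X : Type*} [NormedAddCommGroup X] [NormedSpace ℝ X]

/-- A porous set has a porous trace on `E`, provided holes around points of a dense subset `D` of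
`E` can be centred in `D`. -/
theorem Por.restrict {E : Submodule ℝ X} {D B : Set X} (hDE : D ⊆ E)
    (hED : (E : Set X) ⊆ closure D)
    (hB : ∀ x ∈ D, ∀ r s : ℚ, (∃ z, ball z (s : ℝ) ⊆ ball x r \ B) →
      ∃ z ∈ D, ball z (s : ℝ) ⊆ ball x r \ B)
    (x : E) (hx : Por B (x : X)) : Por (Subtype.val ⁻¹' B : Set E) x := by
  obtain ⟨c, hc, H⟩ := hx
  refine ⟨c / 6, by positivity, fun R₀ hR₀ => ?_⟩
  obtain ⟨R, h1, h2, z, hz⟩ := H (R₀ / 3) (by positivity)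
  obtain ⟨s, hs1, hs2⟩ := exists_rat_btwn (show c * R / 2 < c * R by nlinarith [mul_pos hc h1])
  obtain ⟨r, hr1, hr2⟩ := exists_rat_btwn (show 3 / 2 * R < 2 * R by linarith)
  obtain ⟨x', hx'D, hx'⟩ := Metric.mem_closure_iff.1 (hED x.2) (R / 2) (by positivity)
  -- a hole in the ball around `x'` need only avoid `B` inside `B(x', r)`
  obtain ⟨z', hz'D, hz'⟩ := hB x' hx'D r s ⟨z, fun w hw => by
    have hw' := hz (ball_subset_ball hs2.le hw)
    refine ⟨?_, hw'.2⟩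
    have := hw'.1
    rw [mem_ball] at this ⊢
    linarith [dist_triangle w x x']⟩
  refine ⟨3 * R, by positivity, by linarith, ⟨z', hDE hz'D⟩, fun w hw => ?_⟩
  have hw' : (w : X) ∈ ball z' (s : ℝ) := by
    rw [mem_ball, Subtype.dist_eq] at hw
    rw [mem_ball]
    refine hw.trans ?_
    linarith
  refine ⟨?_, (hz' hw').2⟩
  have := (hz' hw').1
  rw [mem_ball] at this ⊢
  rw [Subtype.dist_eq]
  rw [dist_comm] at hx'
  linarith [dist_triangle (w : X) x' x]

/-- If `T` is seen by `D ⊆ E`, in the sense that `D` meets `T ∩ B(d, q)` whenever `d ∈ D` and this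
set is nonempty, then a subset of `E` whose closure contains `T ∩ D` cannot be porous in `E` unless
`T` is porous in `X`. -/
theorem Por.of_restrict {E : Submodule ℝ X} {D T : Set X} {B : Set E} (hDE : D ⊆ E)
    (hED : (E : Set X) ⊆ closure D)
    (hT : ∀ d ∈ D, ∀ q : ℚ, (T ∩ ball d q).Nonempty → (T ∩ ball d q ∩ D).Nonempty)
    (hTB : ∀ d : E, (d : X) ∈ T ∩ D → d ∈ closure B) {x : E} (hx : Por B x) :
    Por T (x : X) := by
  obtain ⟨c, hc, H⟩ := hx
  refine ⟨c / 3 / (1 + c), by positivity, fun R₀ hR₀ => ?_⟩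
  obtain ⟨R, h1, h2, z, hz⟩ := H (R₀ / (1 + c)) (by positivity)
  have hcR := mul_pos hc h1
  rw [lt_div_iff₀ (by positivity)] at h2
  obtain ⟨q, hq1, hq2⟩ := exists_rat_btwn (show c * R / 3 < c * R / 2 by linarith)
  obtain ⟨d, hdD, hd⟩ := Metric.mem_closure_iff.1 (hED z.2) (c * R / 3) (by positivity)
  rw [dist_comm] at hd
  have hempty : ∀ w ∈ ball d (q : ℝ), w ∉ T := by
    intro w hw hwT
    obtain ⟨u, ⟨huT, hud⟩, huD⟩ := hT d hdD q ⟨w, hwT, hw⟩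
    have hcl := hTB ⟨u, hDE huD⟩ ⟨huT, huD⟩
    have hu : (⟨u, hDE huD⟩ : E) ∈ ball z (c * R) := by
      rw [mem_ball] at hud ⊢
      rw [Subtype.dist_eq]
      change dist u z < _
      linarith [dist_triangle u d z]
    obtain ⟨v, hv1, hv2⟩ := mem_closure_iff.1 hcl _ isOpen_ball hu
    exact (hz hv1).2 hv2
  have e : c / 3 / (1 + c) * (R * (1 + c)) = c * R / 3 := by field_simp
  refine ⟨R * (1 + c), by positivity, h2, d, ?_⟩
  rw [e]
  intro w hw
  have hw' := ball_subset_ball hq1.le hw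
  refine ⟨?_, hempty w hw'⟩
  have hzx := (hz (mem_ball_self hcR)).1
  rw [mem_ball, Subtype.dist_eq] at hzx
  rw [mem_ball] at hw ⊢
  have := dist_triangle4 w d z x
  nlinarith

/-- The closure properties of a family `𝒞` of subsets of `X` under which non-σ-porosity of `G_δ`
sets passes to the closure of `{x | {x} ∈ 𝒞}`. -/
structure Good (𝒞 : Set (Set X)) : Prop where
  pick : ∀ T ∈ 𝒞, T.Nonempty → ∃ x ∈ T, {x} ∈ 𝒞
  res : ∀ T ∈ 𝒞, ∀ d : X, {d} ∈ 𝒞 → ∀ q : ℚ, T ∩ ball d q ∈ 𝒞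
  com : ∀ T ∈ 𝒞, ∀ n k, ker (T ∩ thick T n k) ∈ 𝒞

/-- One step of the construction: shrink `T` to a small set that is thick for `T` and that either
stays away from `B`, or has been cut out of a set in whose trace `B` is dense. -/
theorem Good.step {𝒞 : Set (Set X)} (h𝒞 : Good 𝒞) {E : Submodule ℝ X}
    {T : Set X} (hT : T ∈ 𝒞) (hne : T.Nonempty) (hfull : Full T) {O : Set X} (hO : IsOpen O)
    (hTO : T ⊆ O) (B : Set E) (n : ℕ) :
    ∃ T' ∈ 𝒞, T'.Nonempty ∧ Full T' ∧ T' ⊆ T ∧ closure T' ⊆ O ∧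
      (∀ u ∈ T', ∀ v ∈ T', dist u v ≤ 2 * (1 / ((n : ℝ) + 1))) ∧ (∃ k, T' ⊆ thick T n k) ∧
      ((∀ b ∈ B, (b : X) ∉ closure T') ∨
        ∀ d : E, (d : X) ∈ T ∩ {x | {x} ∈ 𝒞} → d ∈ closure B) := by
  -- a centre `t` and an open set `U` in which to localise
  obtain ⟨t, htT, ht𝒞, U, hU, htU, hUO, hUB⟩ : ∃ t ∈ T, {t} ∈ 𝒞 ∧ ∃ U : Set X, IsOpen U ∧ t ∈ U ∧
      U ⊆ O ∧ ((∀ b ∈ B, (b : X) ∉ U) ∨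
        ∀ d : E, (d : X) ∈ T ∩ {x | {x} ∈ 𝒞} → d ∈ closure B) := by
    by_cases hB : ∀ d : E, (d : X) ∈ T ∩ {x | {x} ∈ 𝒞} → d ∈ closure B
    · obtain ⟨t, ht, ht'⟩ := h𝒞.pick T hT hne
      exact ⟨t, ht, ht', O, hO, hTO ht, subset_rfl, Or.inr hB⟩
    · push Not at hB
      obtain ⟨d, hd, hdB⟩ := hB
      rw [closure_subtype] at hdB
      refine ⟨d, hd.1, hd.2, O ∩ (closure (Subtype.val '' B))ᶜ,
        hO.inter isClosed_closure.isOpen_compl, ⟨hTO hd.1, hdB⟩, inter_subset_left, Or.inl fun b hb h => h.2 (subset_closure ⟨b, hb, rfl⟩)⟩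
  obtain ⟨ε, hε, hball⟩ := Metric.isOpen_iff.1 hU t htU
  obtain ⟨q, hq0, hq⟩ := exists_rat_btwn
    (show (0 : ℝ) < min ε (1 / ((n : ℝ) + 1)) from lt_min hε (by positivity))
  have hT1 := h𝒞.res T hT t ht𝒞 q
  have hT1full : Full (T ∩ ball t (q : ℝ)) := hfull.inter_open isOpen_ball
  obtain ⟨k, hk⟩ := exists_thick (hT1full.not_sp ⟨t, htT, mem_ball_self hq0⟩) n
  have hsub : ker (T ∩ ball t (q : ℝ) ∩ thick (T ∩ ball t (q : ℝ)) n k) ⊆ T ∩ ball t (q : ℝ) :=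
    (ker_subset _).trans inter_subset_left
  have hcl : closure (ker (T ∩ ball t (q : ℝ) ∩ thick (T ∩ ball t (q : ℝ)) n k)) ⊆ U :=
    (closure_mono (hsub.trans inter_subset_right)).trans
      (closure_ball_subset_closedBall.trans
        ((closedBall_subset_ball (hq.trans_le (min_le_left _ _))).trans hball))
  refine ⟨_, h𝒞.com _ hT1 n k, ker_nonempty hk, full_ker _, hsub.trans inter_subset_left,
    hcl.trans hUO, fun u hu v hv => ?_, ⟨k, ?_⟩, hUB.imp_left fun h b hb hb' => h b hb (hcl hb')⟩
  · have h1 := (hsub hu).2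
    have h2 := (hsub hv).2
    rw [mem_ball] at h1 h2
    have h3 := hq.trans_le (min_le_right _ _)
    linarith [dist_triangle_right u v t]
  · exact ((ker_subset _).trans inter_subset_right).trans (thick_mono inter_subset_left n k)

/-- A `G_δ` set that is not σ-porous has a trace on `E` that is not σ-porous. Given countably many
sets porous in `E`, iterating `Good.step` yields a decreasing sequence of members of `𝒞` shrinking
to a point of the trace at which none of those members is porous; hence the point is in none of the
given porous sets. -/
theorem Good.not_sp_restrict [CompleteSpace X] {𝒞 : Set (Set X)} (h𝒞 : Good 𝒞)
    {E : Submodule ℝ X} (hE : (E : Set X) = closure {x | {x} ∈ 𝒞}) {O : ℕ → Set X}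
    (hO : ∀ m, IsOpen (O m)) (hS : ker (⋂ m, O m) ∈ 𝒞)
    (h : SP (Subtype.val ⁻¹' (⋂ m, O m) : Set E)) : SP (⋂ m, O m) := by
  by_contra hnsp
  obtain ⟨B, hB, hcov⟩ := h
  have hDE : {x | {x} ∈ 𝒞} ⊆ (E : Set X) := hE ▸ subset_closure
  let St : Type _ := {T : Set X // T ∈ 𝒞 ∧ T.Nonempty ∧ Full T ∧ T ⊆ ⋂ m, O m}
  have hstep : ∀ (n : ℕ) (T : St), ∃ T' : St, T'.1 ⊆ T.1 ∧ closure T'.1 ⊆ O n ∧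
      (∀ u ∈ T'.1, ∀ v ∈ T'.1, dist u v ≤ 2 * (1 / ((n : ℝ) + 1))) ∧
      (∃ k, T'.1 ⊆ thick T.1 n k) ∧ ((∀ b ∈ B n, (b : X) ∉ closure T'.1) ∨
        ∀ d : E, (d : X) ∈ T.1 ∩ {x | {x} ∈ 𝒞} → d ∈ closure (B n)) := by
    rintro n ⟨T, hT, hne, hfull, hTS⟩
    obtain ⟨T', h1, h2, h3, h4, h5⟩ := h𝒞.step hT hne hfull (hO n)
      (hTS.trans (iInter_subset _ n)) (B n) n
    exact ⟨⟨T', h1, h2, h3, h4.trans hTS⟩, h4, h5⟩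
  choose next hnext using hstep
  let T : ℕ → St := fun n => Nat.rec
    ⟨ker (⋂ m, O m), hS, ker_nonempty hnsp, full_ker _, ker_subset _⟩ (fun n T => next n T) n
  have hTs : ∀ n, T (n + 1) = next n (T n) := fun n => rfl
  have hanti : Antitone fun n => (T n).1 := antitone_nat_of_succ_le fun n => by
    rw [hTs]
    exact (hnext n (T n)).1
  choose t ht ht𝒞 using fun n => h𝒞.pick (T n).1 (T n).2.1 (T n).2.2.1
  have hcau : CauchySeq t := by
    rw [Metric.cauchySeq_iff]
    intro ε hε
    obtain ⟨n, hn⟩ := exists_nat_one_div_lt (half_pos hε)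
    refine ⟨n + 1, fun i hi j hj => ?_⟩
    have := (hnext n (T n)).2.2.1 (t i) (hanti hi (ht i)) (t j) (hanti hj (ht j))
    linarith
  obtain ⟨x, hx⟩ := cauchySeq_tendsto_of_complete hcau
  have hxcl : ∀ n, x ∈ closure (T n).1 := fun n =>
    mem_closure_of_tendsto hx (eventually_atTop.2 ⟨n, fun i hi => hanti hi (ht i)⟩)
  have hxE : x ∈ E := by
    change x ∈ (E : Set X)
    rw [hE]
    exact mem_closure_of_tendsto hx (Eventually.of_forall ht𝒞)
  have hxO : x ∈ ⋂ m, O m := mem_iInter.2 fun m => (hnext m (T m)).2.1 (hxcl (m + 1))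
  -- thickness for `T n` is inherited from the later, smaller sets
  have hnp : ∀ n, ¬ Por (T n).1 x := fun n => not_por_of_closure_thick fun N => by
    obtain ⟨k, hk⟩ := (hnext (max n N) (T (max n N))).2.2.2.1
    exact ⟨max n N, le_max_right _ _, k, closure_mono
      (hk.trans (thick_mono (hanti (le_max_left _ _)) _ _)) (hxcl (max n N + 1))⟩
  obtain ⟨m, hm⟩ := mem_iUnion.1 (hcov (show (⟨x, hxE⟩ : E) ∈ Subtype.val ⁻¹' _ from hxO))
  rcases (hnext m (T m)).2.2.2.2 with h | h
  · exact h _ hm (hxcl (m + 1))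
  · refine hnp m (Por.of_restrict hDE hE.le (fun d hd q hne => ?_) h (hB m _ hm))
    obtain ⟨u, hu, hu'⟩ := h𝒞.pick _ (h𝒞.res _ (T m).2.1 d hd q) hne
    exact ⟨u, hu, hu'⟩

end Transfer

/-! ### Rich families from countable closure conditions -/

section Hull

variable {Z : Type*}

/-- The elements obtained from `A` by at most `n` nested applications of operations in `𝒪`. -/
def stage (𝒪 : Set (Z → Z → Z)) (A : Set Z) : ℕ → Set Z
  | 0 => A
  | n + 1 => stage 𝒪 A n ∪ ⋃ o ∈ 𝒪, image2 o (stage 𝒪 A n) (stage 𝒪 A n)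

/-- The closure of `A` under the binary operations in `𝒪`. -/
def hull (𝒪 : Set (Z → Z → Z)) (A : Set Z) : Set Z := ⋃ n, stage 𝒪 A n

theorem stage_mono (𝒪 : Set (Z → Z → Z)) {A B : Set Z} (h : A ⊆ B) (n : ℕ) :
    stage 𝒪 A n ⊆ stage 𝒪 B n := by
  induction n with
  | zero => exact h
  | succ n ih =>
    exact union_subset_union ih (iUnion₂_mono fun o _ => image2_subset ih ih)

theorem stage_monotone (𝒪 : Set (Z → Z → Z)) (A : Set Z) : Monotone (stage 𝒪 A) :=
  monotone_nat_of_le_succ fun _ => subset_union_left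

theorem hull_mono (𝒪 : Set (Z → Z → Z)) {A B : Set Z} (h : A ⊆ B) : hull 𝒪 A ⊆ hull 𝒪 B :=
  iUnion_mono (stage_mono 𝒪 h)

theorem subset_hull (𝒪 : Set (Z → Z → Z)) (A : Set Z) : A ⊆ hull 𝒪 A :=
  subset_iUnion (stage 𝒪 A) 0

theorem hull_closed {𝒪 : Set (Z → Z → Z)} {A : Set Z} {o : Z → Z → Z} (ho : o ∈ 𝒪) {a b : Z}
    (ha : a ∈ hull 𝒪 A) (hb : b ∈ hull 𝒪 A) : o a b ∈ hull 𝒪 A := by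
  obtain ⟨m, hm⟩ := mem_iUnion.1 ha
  obtain ⟨n, hn⟩ := mem_iUnion.1 hb
  exact mem_iUnion.2 ⟨max m n + 1, Or.inr (mem_biUnion ho (mem_image2_of_mem
    (stage_monotone 𝒪 A (le_max_left _ _) hm) (stage_monotone 𝒪 A (le_max_right _ _) hn)))⟩

theorem hull_countable {𝒪 : Set (Z → Z → Z)} (h𝒪 : 𝒪.Countable) {A : Set Z} (hA : A.Countable) :
    (hull 𝒪 A).Countable := by
  refine countable_iUnion fun n => ?_
  induction n with
  | zero => exact hA
  | succ n ih => exact ih.union (h𝒪.biUnion fun o _ => ih.image2 ih o)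

theorem hull_iUnion (𝒪 : Set (Z → Z → Z)) {A : ℕ → Set Z} (hA : Monotone A) :
    hull 𝒪 (⋃ i, A i) ⊆ ⋃ i, hull 𝒪 (A i) := by
  have : ∀ n, stage 𝒪 (⋃ i, A i) n ⊆ ⋃ i, stage 𝒪 (A i) n := by
    intro n
    induction n with
    | zero => exact subset_rfl
    | succ n ih =>
      refine union_subset (ih.trans (iUnion_mono fun i => subset_union_left)) ?_
      refine iUnion₂_subset fun o ho => ?_
      rintro _ ⟨a, ha, b, hb, rfl⟩
      obtain ⟨i, hi⟩ := mem_iUnion.1 (ih ha)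
      obtain ⟨j, hj⟩ := mem_iUnion.1 (ih hb)
      exact mem_iUnion.2 ⟨max i j, Or.inr (mem_biUnion ho (mem_image2_of_mem
        (stage_mono 𝒪 (hA (le_max_left _ _)) n hi)
        (stage_mono 𝒪 (hA (le_max_right _ _)) n hj)))⟩
  refine iUnion_subset fun n => (this n).trans (iUnion_mono fun i => subset_iUnion _ n)

end Hull

section Rich

open scoped Pointwise

variable {X : Type*} [NormedAddCommGroup X] [NormedSpace ℝ X]

/-- The closed linear span. -/
def cs (A : Set X) : Submodule ℝ X := (Submodule.span ℝ A).topologicalClosure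

theorem subset_cs (A : Set X) : A ⊆ cs A :=
  Submodule.subset_span.trans (Submodule.le_topologicalClosure _)

theorem cs_le {A : Set X} {W : Submodule ℝ X} (hW : IsClosed (W : Set X)) (h : A ⊆ W) : cs A ≤ W :=
  Submodule.topologicalClosure_minimal _ (Submodule.span_le.2 h) hW

theorem isClosed_cs (A : Set X) : IsClosed (cs A : Set X) :=
  Submodule.isClosed_topologicalClosure _

theorem cs_mono {A B : Set X} (h : A ⊆ B) : cs A ≤ cs B :=
  cs_le (isClosed_cs B) (h.trans (subset_cs B))

/-- A family of countable sets of generators, coherent enough that each of its members can be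
recovered from the closed linear span: the order on spans is the order on generators. -/
structure GenSystem (𝒜 : Set (Set X)) : Prop where
  countable : ∀ A ∈ 𝒜, A.Countable
  nonempty : 𝒜.Nonempty
  cofinal : ∀ A ∈ 𝒜, ∀ N : Set X, N.Countable → ∃ B ∈ 𝒜, A ⊆ B ∧ N ⊆ cs B
  union : ∀ A : ℕ → Set X, (∀ n, A n ∈ 𝒜) → Monotone A → ⋃ n, A n ∈ 𝒜
  of_cs_le : ∀ A ∈ 𝒜, ∀ B ∈ 𝒜, cs A ≤ cs B → A ⊆ B

/-- The starting family for the hull: singletons of points of `A`, together with `{0}`. -/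
def base (A : Set X) : Set (Set X) := insert {0} (singleton '' A)

theorem base_mono {A B : Set X} (h : A ⊆ B) : base A ⊆ base B :=
  insert_subset_insert (image_mono h)

theorem base_iUnion (A : ℕ → Set X) : base (⋃ i, A i) ⊆ ⋃ i, base (A i) := by
  rintro _ (rfl | ⟨a, ha, rfl⟩)
  · exact mem_iUnion.2 ⟨0, Or.inl rfl⟩
  · obtain ⟨i, hi⟩ := mem_iUnion.1 ha
    exact mem_iUnion.2 ⟨i, Or.inr ⟨a, hi, rfl⟩⟩

/-- Points whose singletons belong to the closure of `base A` under the operations `𝒪`. -/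
def pts (𝒪 : Set (Set X → Set X → Set X)) (A : Set X) : Set X := {x | {x} ∈ hull 𝒪 (base A)}

theorem subset_pts (𝒪 : Set (Set X → Set X → Set X)) (A : Set X) : A ⊆ pts 𝒪 A :=
  fun a ha => subset_hull 𝒪 _ (Or.inr ⟨a, ha, rfl⟩)

theorem pts_countable {𝒪 : Set (Set X → Set X → Set X)} (h𝒪 : 𝒪.Countable) {A : Set X}
    (hA : A.Countable) : (pts 𝒪 A).Countable :=
  (hull_countable h𝒪 ((hA.image _).insert _)).preimage singleton_injective

theorem pts_iUnion (𝒪 : Set (Set X → Set X → Set X)) {A : ℕ → Set X} (hA : Monotone A) :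
    pts 𝒪 (⋃ i, A i) ⊆ ⋃ i, pts 𝒪 (A i) := by
  intro x hx
  have h1 := hull_iUnion 𝒪 (A := fun i => base (A i)) (fun i j hij => base_mono (hA hij))
    (hull_mono 𝒪 (base_iUnion A) hx)
  obtain ⟨i, hi⟩ := mem_iUnion.1 h1
  exact mem_iUnion.2 ⟨i, hi⟩

theorem closure_pts {𝒪 : Set (Set X → Set X → Set X)} (hadd : (fun C C' => C + C') ∈ 𝒪)
    (hsmul : ∀ q : ℚ, (fun C _ => (q : ℝ) • C) ∈ 𝒪) {A : Set X} (hA : pts 𝒪 A ⊆ cs A) :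
    (cs A : Set X) = closure (pts 𝒪 A) := by
  have h0 : (0 : X) ∈ pts 𝒪 A := subset_hull 𝒪 _ (Or.inl rfl)
  have h1 : ∀ x ∈ pts 𝒪 A, ∀ y ∈ pts 𝒪 A, x + y ∈ pts 𝒪 A := fun x hx y hy => by
    have := hull_closed hadd hx hy
    simpa [pts] using this
  have h2 : ∀ q : ℚ, ∀ x ∈ pts 𝒪 A, (q : ℝ) • x ∈ pts 𝒪 A := fun q x hx => by
    have := hull_closed (hsmul q) hx hx
    simpa [pts] using this
  let W : Submodule ℝ X :=
    { carrier := closure (pts 𝒪 A)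
      zero_mem' := subset_closure h0
      add_mem' := fun {x y} hx hy => map_mem_closure₂ continuous_add hx hy h1
      smul_mem' := fun r x hx => by
        refine map_mem_closure₂ (s := range ((↑) : ℚ → ℝ)) (f := fun (r : ℝ) (x : X) => r • x)
          continuous_smul (Rat.denseRange_cast r) hx ?_
        rintro _ ⟨q, rfl⟩ x hx
        exact h2 q x hx }
  refine subset_antisymm ?_ (closure_minimal hA (isClosed_cs A))
  exact cs_le (W := W) isClosed_closure ((subset_pts 𝒪 A).trans subset_closure)

/-- A system of generators turns a countable list of closure conditions into a rich family. -/
theorem GenSystem.exists_rich {𝒜 : Set (Set X)} (h𝒜 : GenSystem 𝒜)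
    {𝒪 : Set (Set X → Set X → Set X)} (h𝒪 : 𝒪.Countable) (hadd : (fun C C' => C + C') ∈ 𝒪)
    (hsmul : ∀ q : ℚ, (fun C _ => (q : ℝ) • C) ∈ 𝒪) :
    ∃ 𝓕 : Set (Submodule ℝ X), IsRichFamily 𝓕 ∧ ∀ F ∈ 𝓕, ∃ 𝒞 : Set (Set X), 𝒞.Nonempty ∧
      (∀ o ∈ 𝒪, ∀ C ∈ 𝒞, ∀ C' ∈ 𝒞, o C C' ∈ 𝒞) ∧ (F : Set X) = closure {x | {x} ∈ 𝒞} := by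
  refine ⟨{F | ∃ A ∈ 𝒜, pts 𝒪 A ⊆ cs A ∧ F = cs A}, ⟨?_, ?_, ?_⟩, ?_⟩
  · rintro _ ⟨A, hA, -, rfl⟩
    exact ⟨isClosed_cs A, ((h𝒜.countable A hA).isSeparable.span (R := ℝ)).closure⟩
  · intro S hS hsep
    obtain ⟨N, hN, hSN⟩ := hsep
    obtain ⟨A₀, hA₀⟩ := h𝒜.nonempty
    obtain ⟨A₁, hA₁, -, hNA₁⟩ := h𝒜.cofinal A₀ hA₀ N hN
    have hstep : ∀ A : 𝒜, ∃ B : 𝒜, A.1 ⊆ B.1 ∧ pts 𝒪 A.1 ⊆ cs B.1 := fun A => by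
      obtain ⟨B, hB, h1, h2⟩ := h𝒜.cofinal A.1 A.2 _ (pts_countable h𝒪 (h𝒜.countable _ A.2))
      exact ⟨⟨B, hB⟩, h1, h2⟩
    choose next hn1 hn2 using hstep
    let A : ℕ → 𝒜 := fun n => Nat.rec ⟨A₁, hA₁⟩ (fun _ B => next B) n
    have hmono : Monotone fun n => (A n).1 := monotone_nat_of_le_succ fun n => hn1 (A n)
    refine ⟨cs (⋃ n, (A n).1), ⟨_, h𝒜.union _ (fun n => (A n).2) hmono, ?_, rfl⟩, ?_⟩
    · refine (pts_iUnion 𝒪 hmono).trans (iUnion_subset fun n => (hn2 (A n)).trans ?_)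
      exact cs_mono (subset_iUnion (fun n => (A n).1) (n + 1))
    · refine hSN.trans (closure_minimal (hNA₁.trans ?_) (isClosed_cs _))
      exact cs_mono (subset_iUnion (fun n => (A n).1) 0)
  · intro F hF hmono
    choose A hA hp hFA using hF
    have hAm : Monotone A := fun i j hij =>
      h𝒜.of_cs_le _ (hA i) _ (hA j) (by rw [← hFA, ← hFA]; exact hmono hij)
    refine ⟨⋃ n, A n, h𝒜.union A hA hAm, ?_, ?_⟩
    · exact (pts_iUnion 𝒪 hAm).trans
        (iUnion_subset fun n => (hp n).trans (cs_mono (subset_iUnion A n)))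
    · refine le_antisymm ?_ ?_
      · refine Submodule.topologicalClosure_minimal _ (iSup_le fun n => ?_) (isClosed_cs _)
        rw [hFA]
        exact cs_mono (subset_iUnion A n)
      · refine cs_le (Submodule.isClosed_topologicalClosure _) (iUnion_subset fun n => ?_)
        refine (subset_cs _).trans ?_
        rw [← hFA]
        exact (le_iSup F n).trans (Submodule.le_topologicalClosure _)
  · rintro _ ⟨A, hA, hp, rfl⟩
    exact ⟨hull 𝒪 (base A), ⟨_, subset_hull 𝒪 _ (Or.inl rfl)⟩,
      fun o ho C hC C' hC' => hull_closed ho hC hC', closure_pts hadd hsmul hp⟩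

/-- Every countable set lies in the closed span of countably many elements of a set with dense
span. -/
theorem exists_countable_cs {s : Set X} (hs : cs s = ⊤) {N : Set X} (hN : N.Countable) :
    ∃ t ⊆ s, t.Countable ∧ N ⊆ cs t := by
  have h1 : ∀ y : X, ∃ t ⊆ s, t.Countable ∧ y ∈ cs t := by
    intro y
    have hy : y ∈ closure (Submodule.span ℝ s : Set X) := by
      have : y ∈ cs s := hs ▸ Submodule.mem_top
      exact this
    obtain ⟨u, hu, huy⟩ := mem_closure_iff_seq_limit.1 hy
    choose t ht hut using fun n => Submodule.mem_span_finite_of_mem_span (hu n)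
    refine ⟨⋃ n, (t n : Set X), iUnion_subset ht, countable_iUnion fun n => (t n).countable_toSet, ?_⟩
    refine (isClosed_cs _).mem_of_tendsto huy (Eventually.of_forall fun n => ?_)
    exact Submodule.le_topologicalClosure _
      (Submodule.span_mono (subset_iUnion (fun n => (t n : Set X)) n) (hut n))
  choose t ht htc hyt using h1
  refine ⟨⋃ y ∈ N, t y, iUnion₂_subset fun y _ => ht y, hN.biUnion fun y _ => htc y, fun y hy => ?_⟩
  exact cs_mono (subset_biUnion_of_mem (u := t) hy) (hyt y)

theorem genSystem_of_minimal {I : Type*} {x : I → X} (hx : IsFundamentalMinimalSystem x) :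
    GenSystem {A : Set X | A ⊆ range x ∧ A.Countable} where
  countable _ h := h.2
  nonempty := ⟨∅, empty_subset _, countable_empty⟩
  cofinal A hA N hN := by
    obtain ⟨t, ht, htc, hNt⟩ := exists_countable_cs (s := range x) hx.1 hN
    exact ⟨A ∪ t, ⟨union_subset hA.1 ht, hA.2.union htc⟩, subset_union_left,
      hNt.trans (cs_mono subset_union_right)⟩
  union A hA _ := ⟨iUnion_subset fun n => (hA n).1, countable_iUnion fun n => (hA n).2⟩
  of_cs_le A hA B hB hAB := by
    intro a ha
    by_contra haB
    obtain ⟨i, rfl⟩ := hA.1 ha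
    refine hx.2 i ?_
    have hBi : B ⊆ x '' {j | j ≠ i} := by
      intro b hb
      obtain ⟨j, rfl⟩ := hB.1 hb
      refine ⟨j, ?_, rfl⟩
      rintro rfl
      exact haB hb
    exact cs_mono hBi (hAB (subset_cs A ha))

/-- In density `ℵ₁`, enumerate a dense set in order type `ω₁` and use those countable initial
segments whose closed span is strictly larger than the span of every shorter one. -/
theorem exists_genSystem_of_aleph_one {s : Set X} (hs : Dense s)
    (hcard : Cardinal.mk s = Cardinal.aleph 1) (hns : ∀ t : Set X, Dense t → ¬ t.Countable) :
    ∃ 𝒜 : Set (Set X), GenSystem 𝒜 := by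
  obtain ⟨r, wo, hr⟩ := Cardinal.exists_ord_eq s
  have hseg : ∀ a : s, {b : s | r b a ∨ b = a}.Countable := by
    intro a
    have h1 : Cardinal.mk {b : s // r b a} < Cardinal.aleph 1 := by
      rw [← hcard]
      exact Cardinal.card_typein_lt a hr
    have h2 : {b : s | r b a}.Countable := by
      rw [← Cardinal.le_aleph0_iff_set_countable]
      exact Cardinal.lt_aleph_one_iff.1 h1
    exact h2.union (countable_singleton a)
  let ini : Set s → Prop := fun J => ∀ a ∈ J, ∀ b, r b a → b ∈ J
  let c : Set s → Submodule ℝ X := fun J => cs (Subtype.val '' J)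
  have hc : ∀ {J K : Set s}, J ⊆ K → c J ≤ c K := fun h => cs_mono (image_mono h)
  -- an initial segment missing `a` consists of predecessors of `a`
  have hpred : ∀ {J : Set s}, ini J → ∀ a ∉ J, ∀ b ∈ J, r b a := by
    intro J hJ a ha b hb
    rcases trichotomous_of r b a with h | h | h
    · exact h
    · exact absurd (h ▸ hb) ha
    · exact absurd (hJ b hb a h) ha
  have hsegini : ∀ a, ini {b | r b a ∨ b = a} := by
    rintro a x (hx | rfl) y hy
    · exact Or.inl (_root_.trans hy hx)
    · exact Or.inl hy
  have htop : cs s = ⊤ := by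
    rw [eq_top_iff]
    intro x _
    have : x ∈ closure s := hs x
    exact closure_minimal (subset_cs s) (isClosed_cs s) this
  let 𝒥 : Set (Set s) := {J | ini J ∧ J.Countable ∧ ∀ K, ini K → K ⊂ J → c K ≠ c J}
  refine ⟨image Subtype.val '' 𝒥, ?_, ?_, ?_, ?_, ?_⟩
  · rintro _ ⟨J, hJ, rfl⟩
    exact hJ.2.1.image _
  · exact ⟨_, ∅, ⟨fun a ha => ha.elim, countable_empty, fun K _ hK => hK.2 (empty_subset K) |>.elim⟩,
      rfl⟩
  · rintro _ ⟨J, hJ, rfl⟩ N hN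
    obtain ⟨t, hts, htc, hNt⟩ := exists_countable_cs htop hN
    have htc' : (Subtype.val ⁻¹' t : Set s).Countable := htc.preimage Subtype.val_injective
    let J' : Set s := J ∪ ⋃ a ∈ (Subtype.val ⁻¹' t : Set s), {b | r b a ∨ b = a}
    have hJ'c : J'.Countable := hJ.2.1.union (htc'.biUnion fun a _ => hseg a)
    have htJ' : t ⊆ Subtype.val '' J' := fun a ha =>
      ⟨⟨a, hts ha⟩, Or.inr (mem_biUnion (show (⟨a, hts ha⟩ : s) ∈ Subtype.val ⁻¹' t from ha)
        (Or.inr rfl)), rfl⟩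
    -- a nonseparable space is not the closed span of a countable set
    have hex : ∃ a : s, (a : X) ∉ c J' := by
      by_contra! hall
      have h1 : IsSeparable (univ : Set X) :=
        ((hJ'c.image Subtype.val).isSeparable.span (R := ℝ)).closure.mono fun x _ =>
          closure_minimal (fun y hy => hall ⟨y, hy⟩) (isClosed_cs _) (hs x)
      obtain ⟨u, hu, hu'⟩ := h1
      exact hns u (fun x => hu' (mem_univ x)) hu
    have wf : WellFounded r := wo.wf
    let a := wf.min {a : s | (a : X) ∉ c J'} hex
    have ha : (a : X) ∉ c J' := wf.min_mem _ hex
    have hmin : ∀ b, r b a → (b : X) ∈ c J' := fun b hb => by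
      by_contra h
      exact wf.not_lt_min _ (show b ∈ {a : s | (a : X) ∉ c J'} from h) hb
    have haJ' : a ∉ J' := fun h => ha (subset_cs _ ⟨a, h, rfl⟩)
    have hJ'ini : ini J' := by
      rintro x (hx | hx) y hy
      · exact Or.inl (hJ.1 x hx y hy)
      · obtain ⟨d, hd, hx⟩ := mem_iUnion₂.1 hx
        exact Or.inr (mem_biUnion hd (hsegini d x hx y hy))
    have hJ'sub : J' ⊆ {b | r b a ∨ b = a} := fun b hb => Or.inl (hpred hJ'ini a haJ' b hb)
    refine ⟨_, ⟨{b | r b a ∨ b = a}, ⟨hsegini a, hseg a, fun K hK hKs heq => ?_⟩, rfl⟩, ?_, ?_⟩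
    · have haK : a ∉ K := by
        intro haK
        refine hKs.2 ?_
        rintro b (hb | rfl)
        · exact hK a haK b hb
        · exact haK
      have hle : c K ≤ c J' := by
        refine cs_le (isClosed_cs _) ?_
        rintro _ ⟨b, hb, rfl⟩
        exact hmin b (hpred hK a haK b hb)
      exact ha (hle (heq ▸ subset_cs _ ⟨a, Or.inr rfl, rfl⟩))
    · exact image_mono (subset_union_left.trans hJ'sub)
    · exact hNt.trans (cs_mono (htJ'.trans (image_mono hJ'sub)))
  · intro A hA _
    choose J hJ hJA using hA
    obtain rfl : (fun n => Subtype.val '' J n) = A := funext hJA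
    refine ⟨⋃ n, J n, ⟨?_, countable_iUnion fun n => (hJ n).2.1, ?_⟩, image_iUnion⟩
    · intro a ha b hb
      obtain ⟨n, hn⟩ := mem_iUnion.1 ha
      exact mem_iUnion.2 ⟨n, (hJ n).1 a hn b hb⟩
    · intro K hK hKs heq
      obtain ⟨a, ha, haK⟩ := exists_of_ssubset hKs
      obtain ⟨n, hn⟩ := mem_iUnion.1 ha
      have hKn : K ⊂ J n := by
        refine ⟨fun b hb => (hJ n).1 a hn b (hpred hK a haK b hb), fun h => haK (h hn)⟩
      exact (hJ n).2.2 K hK hKn (le_antisymm (hc hKn.1) (heq ▸ hc (subset_iUnion J n)))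
  · rintro _ ⟨J, hJ, rfl⟩ _ ⟨K, hK, rfl⟩ hle
    refine image_mono fun a ha => ?_
    by_contra haK
    have hKJ : K ⊂ J :=
      ⟨fun b hb => hJ.1 a ha b (hpred hK.1 a haK b hb), fun h => haK (h ha)⟩
    exact hJ.2.2 K hK.1 hKJ (le_antisymm (hc hKJ.1) hle)

end Rich

/-! ### Separable reduction for the set of non-differentiability -/

section Main

variable {X : Type*} [NormedAddCommGroup X] [NormedSpace ℝ X]
  {Y : Type*} [NormedAddCommGroup Y] [NormedSpace ℝ Y]

open Classical in
/-- The `i`-th coordinate of a chosen solution `y` of `R C y`, as an operation on sets that returns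
singletons. -/
noncomputable def sk (R : Set X → (Fin 3 → X) → Prop) (i : Fin 3) (C _C' : Set X) : Set X :=
  {if h : ∃ y, R C y then h.choose i else 0}

theorem exists_of_sk {𝒞 : Set (Set X)} {R : Set X → (Fin 3 → X) → Prop}
    (h𝒞 : ∀ i, ∀ C ∈ 𝒞, ∀ C' ∈ 𝒞, sk R i C C' ∈ 𝒞) {C : Set X} (hC : C ∈ 𝒞) (h : ∃ y, R C y) :
    ∃ y, (∀ i, {y i} ∈ 𝒞) ∧ R C y := by
  refine ⟨h.choose, fun i => ?_, h.choose_spec⟩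
  have := h𝒞 i C hC C hC
  rwa [sk, dif_pos h] at this

/-- The points violating the `n`-th condition of the differentiability criterion, as a `G_δ` set. -/
def nd (f : X → Y) (n : ℕ) : Set X :=
  ⋂ m : ℕ, (Q f n (Nat.unpair m).1 (Nat.unpair m).2)ᶜ

theorem nondiff_eq [CompleteSpace Y] (f : X → Y) :
    {x | ¬ DifferentiableAt ℝ f x} = ⋃ n, nd f n := by
  ext x
  simp only [differentiableAt_iff_mem_Q, mem_ofPred_eq, not_forall, not_exists, mem_iUnion, nd,
    mem_iInter, mem_compl_iff]
  refine exists_congr fun n => ⟨fun h m => h _ _, fun h K k => ?_⟩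
  simpa using h (Nat.pair K k)

open scoped Pointwise in
/-- The countably many operations whose common invariant families reflect both differentiability of
`f` and porosity of the sets `B n`. -/
def ops (f : X → Y) (B : ℕ → Set X) : Set (Set X → Set X → Set X) :=
  {fun C C' => C + C'} ∪
  range (fun (q : ℚ) (C _ : Set X) => (q : ℝ) • C) ∪
  range (fun (n : ℕ) (_ _ : Set X) => ker (nd f n)) ∪
  range (fun (q : ℚ) (T C : Set X) => T ∩ ⋃ c ∈ C, ball c (q : ℝ)) ∪
  range (fun (p : ℕ × ℕ) (T _ : Set X) => ker (T ∩ thick T p.1 p.2)) ∪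
  range (fun (i : Fin 3) => sk (X := X) (fun T y => y 0 ∈ T) i) ∪
  range (fun (p : ℕ × ℚ × ℚ × Fin 3) => sk (X := X) (fun C y => ∃ x, C = {x} ∧
    ball (y 0) (p.2.2.1 : ℝ) ⊆ ball x (p.2.1 : ℝ) \ B p.1) p.2.2.2) ∪
  range (fun (p : (Fin 3 → ℚ) × ℕ × ℕ × ℕ × ℕ × Fin 3) => sk (X := X) (fun C y => ∃ x, C = {x} ∧
    Viol f p.1 p.2.1 p.2.2.1 p.2.2.2.1 p.2.2.2.2.1 x y) p.2.2.2.2.2)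

theorem ops_countable (f : X → Y) (B : ℕ → Set X) : (ops f B).Countable := by
  unfold ops
  exact (((((((countable_singleton _).union (countable_range _)).union (countable_range _)).union
    (countable_range _)).union (countable_range _)).union (countable_range _)).union
    (countable_range _)).union (countable_range _)

/-- Separable reduction in spaces with a system of generators. The sets `B n` fed into `ops` witness
σ-porosity of the non-differentiability set of `f`, if there is such a witness. -/
theorem GenSystem.main [CompleteSpace X] [CompleteSpace Y] {𝒜 : Set (Set X)} (h𝒜 : GenSystem 𝒜)
    (f : X → Y) :
    ∃ 𝓕 : Set (Submodule ℝ X), IsRichFamily 𝓕 ∧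
      ∀ F ∈ 𝓕,
        (IsSigmaUpperPorous {x : X | ¬DifferentiableAt ℝ f x} ↔
          IsSigmaUpperPorous {y : F | ¬DifferentiableAt ℝ (fun z : F => f z) y}) := by
  obtain ⟨B, hB⟩ : ∃ B : ℕ → Set X, SP {x : X | ¬DifferentiableAt ℝ f x} →
      (∀ n, ∀ x ∈ B n, Por (B n) x) ∧ {x : X | ¬DifferentiableAt ℝ f x} ⊆ ⋃ n, B n := by
    by_cases h : SP {x : X | ¬DifferentiableAt ℝ f x}
    · obtain ⟨B, hB⟩ := h
      exact ⟨B, fun _ => hB⟩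
    · exact ⟨fun _ => ∅, fun h' => absurd h' h⟩
  obtain ⟨𝓕, hrich, h𝓕⟩ := h𝒜.exists_rich (ops_countable f B) (by simp [ops])
    (fun q => by simp [ops])
  refine ⟨𝓕, hrich, fun F hF => ?_⟩
  obtain ⟨𝒞, ⟨C₀, hC₀⟩, hop, hFc⟩ := h𝓕 F hF
  have hDF : {x | {x} ∈ 𝒞} ⊆ (F : Set X) := hFc ▸ subset_closure
  have hpick : ∀ T ∈ 𝒞, T.Nonempty → ∃ x ∈ T, {x} ∈ 𝒞 := by
    rintro T hT ⟨x, hx⟩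
    obtain ⟨y, hy, hyT⟩ := exists_of_sk (R := fun T y => y 0 ∈ T)
      (fun i => hop _ (by simp [ops])) hT ⟨fun _ => x, hx⟩
    exact ⟨y 0, hyT, hy 0⟩
  have hgood : Good 𝒞 := by
    refine ⟨hpick, fun T hT d hd q => ?_, fun T hT n k => ?_⟩
    · have := hop (fun T C : Set X => T ∩ ⋃ c ∈ C, ball c (q : ℝ)) (by simp [ops]) T hT _ hd
      simpa using this
    · exact hop (fun T _ : Set X => ker (T ∩ thick T n k)) (by simp [ops]) T hT T hT
  have hker : ∀ n, ker (nd f n) ∈ 𝒞 := fun n =>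
    hop (fun _ _ : Set X => ker (nd f n)) (by simp [ops]) _ hC₀ _ hC₀
  have hhole : ∀ n, ∀ x ∈ {x | {x} ∈ 𝒞}, ∀ r s : ℚ,
      (∃ z, ball z (s : ℝ) ⊆ ball x r \ B n) → ∃ z ∈ {x | {x} ∈ 𝒞},
        ball z (s : ℝ) ⊆ ball x r \ B n := by
    rintro n x hx r s ⟨z, hz⟩
    obtain ⟨y, hy, x', hx', hyx⟩ := exists_of_sk
      (R := fun C y => ∃ x, C = {x} ∧ ball (y 0) (s : ℝ) ⊆ ball x (r : ℝ) \ B n)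
      (fun i => hop _ (Or.inl (Or.inr ⟨(n, r, s, i), rfl⟩))) hx ⟨fun _ => z, x, rfl, hz⟩
    obtain rfl := singleton_injective hx'
    exact ⟨y 0, hy 0, hyx⟩
  have hviol : ∀ x ∈ {x | {x} ∈ 𝒞}, ∀ (a : Fin 3 → ℚ) (K n k l : ℕ),
      (∃ y, Viol f a K n k l x y) → ∃ y, (∀ i, y i ∈ F) ∧ Viol f a K n k l x y := by
    rintro x hx a K n k l ⟨z, hz⟩
    obtain ⟨y, hy, x', hx', hyx⟩ := exists_of_sk
      (R := fun C y => ∃ x, C = {x} ∧ Viol f a K n k l x y)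
      (fun i => hop _ (Or.inr ⟨(a, K, n, k, l, i), rfl⟩)) hx ⟨z, x, rfl, hz⟩
    obtain rfl := singleton_injective hx'
    exact ⟨y, fun i => hDF (hy i), hyx⟩
  have htrace : {y : F | ¬DifferentiableAt ℝ (fun z : F => f z) y} =
      Subtype.val ⁻¹' {x : X | ¬DifferentiableAt ℝ f x} := by
    ext y
    refine not_congr ⟨differentiableAt_of_restrict hDF hFc.le hviol y, fun h => ?_⟩
    exact DifferentiableAt.comp (g := f) y h F.subtypeL.differentiableAt
  rw [isSigmaUpperPorous_iff, isSigmaUpperPorous_iff, htrace]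
  constructor
  · intro h
    obtain ⟨hpor, hcov⟩ := hB h
    refine ⟨fun n => Subtype.val ⁻¹' B n,
      fun n x hx => Por.restrict hDF hFc.le (hhole n) x (hpor n x hx), ?_⟩
    rw [← preimage_iUnion]
    exact preimage_mono hcov
  · intro h
    rw [nondiff_eq] at h ⊢
    refine SP.iUnion fun n => hgood.not_sp_restrict hFc
      (fun m => (isClosed_Q f n _ _).isOpen_compl) (hker n) (h.mono ?_)
    exact preimage_mono (subset_iUnion (nd f) n)

end Main

end SepRed

/-- Let `X, Y` be real Banach spaces and `f : X → Y` a function, where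
`X` has a fundamental minimal system or the density character of `X` is `ℵ₁`. Then there
is a rich family `𝓕` of separable subspaces of `X` such that for every `F ∈ 𝓕`: the set
of points where `f` is not Fréchet differentiable is σ-upper porous in `X` iff the set of
points where `f ↾ F` is not Fréchet differentiable is σ-upper porous in `F`. -/
theorem stmt10 {X : Type u} [NormedAddCommGroup X] [NormedSpace ℝ X] [CompleteSpace X]
    {Y : Type*} [NormedAddCommGroup Y] [NormedSpace ℝ Y] [CompleteSpace Y]
    (f : X → Y)
    (hX : (∃ (I : Type u) (x : I → X), IsFundamentalMinimalSystem x) ∨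
      ((∃ s : Set X, Dense s ∧ Cardinal.mk s = Cardinal.aleph 1) ∧
        ∀ s : Set X, Dense s → ¬s.Countable)) :
    ∃ 𝓕 : Set (Submodule ℝ X), IsRichFamily 𝓕 ∧
      ∀ F ∈ 𝓕,
        (IsSigmaUpperPorous {x : X | ¬DifferentiableAt ℝ f x} ↔
          IsSigmaUpperPorous {y : F | ¬DifferentiableAt ℝ (fun z : F => f z) y}) := by
  rcases hX with ⟨I, x, hx⟩ | ⟨⟨s, hs, hcard⟩, hns⟩
  · exact (SepRed.genSystem_of_minimal hx).main f
  · obtain ⟨𝒜, h𝒜⟩ := SepRed.exists_genSystem_of_aleph_one hs hcard hns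
    exact h𝒜.main f
end

section
/- Let κ be a set, K ⊆ [0,1]^κ a nonempty compact subset, and S ⊆ κ a countable admissible set for K. Then the range of the projection P_S : C(K) → C(K), P_S(f) = f∘r_S, is a separable subspace of C(K). -/
/-!
The retraction `r_S` only sees the coordinates in `S`: it factors as `K → L → K`, where `L` is the
image of `K` under restriction to `[0,1]^S` and the second map is extension by zero. Hence every
`f ∘ r_S` is the pullback to `K` of a continuous function on `L`. As `S` is countable, `L` is
compact and second countable, so `C(L)` is second countable and its image under the continuous
pullback map is separable.
-/

open Set TopologicalSpace unitInterval

variable {κ : Type*}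

/-- `T ⊆ κ` is admissible for `K ⊆ [0,1]^κ` if `x ⬝ χ_T ∈ K` for every `x ∈ K`, where
`x ⬝ χ_T` agrees with `x` on `T` and is `0` outside `T`. -/
def Admissible (K : Set (κ → unitInterval)) (T : Set κ) : Prop :=
  ∀ x ∈ K, T.indicator x ∈ K

/-- The retraction `r_T : K → K`, `r_T(x) = x ⬝ χ_T`, for an admissible set `T`. -/
noncomputable def retr (K : Set (κ → unitInterval)) (T : Set κ) (hT : Admissible K T) : K → K :=
  fun x => ⟨T.indicator (x : κ → unitInterval), hT _ x.2⟩

/-- Extension by zero is continuous from the restrictions of the points of `K` to `S` back to `K`;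
composed with restriction it is the retraction `r_S`. -/
theorem exists_factor_retr (K : Set (κ → unitInterval)) (S : Set κ) (hS : Admissible K S) :
    ∃ e : C(S.domRestrict '' K, K),
      ∀ x : K, e ⟨S.domRestrict (x : κ → unitInterval), x, x.2, rfl⟩ = retr K S hS x := by
  classical
  have key : ∀ x : κ → unitInterval,
      (fun i => if h : i ∈ S then S.domRestrict x ⟨i, h⟩ else 0) = S.indicator x := by
    intro x
    funext i
    by_cases h : i ∈ S <;> simp [h]
  refine ⟨⟨fun y => ⟨fun i => if h : i ∈ S then y.1 ⟨i, h⟩ else 0, ?_⟩, ?_⟩, ?_⟩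
  · obtain ⟨_, x, hx, rfl⟩ := y
    rw [key]
    exact hS x hx
  · refine Continuous.subtype_mk (continuous_pi fun i => ?_) _
    by_cases h : i ∈ S
    · simp only [h, dif_pos]
      exact (continuous_apply _).comp continuous_subtype_val
    · simp only [h, dif_neg, not_false_eq_true]
      exact continuous_const
  · intro x
    exact Subtype.ext (key x)

/-- Let `K ⊆ [0,1]^κ` be a nonempty compact subset and `S ⊆ κ` a
countable admissible set. Then the range of the projection `P_S : C(K) → C(K)`,
`P_S(f) = f ∘ r_S`, is a separable subspace of `C(K)`. -/
theorem stmt17 (K : Set (κ → unitInterval)) [CompactSpace K] [Nonempty K]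
    (S : Set κ) (hScnt : S.Countable) (hS : Admissible K S) :
    ∃ P : C(K, ℝ) →L[ℝ] C(K, ℝ),
      (∀ (f : C(K, ℝ)) (x : K), P f x = f (retr K S hS x)) ∧
      TopologicalSpace.IsSeparable (Set.range P) := by
  obtain ⟨e, he⟩ := exists_factor_retr K S hS
  have hcont : Continuous (S.domRestrict : (κ → unitInterval) → S → unitInterval) :=
    continuous_pi fun i => continuous_apply (i : κ)
  have : Countable S := hScnt.to_subtype
  have : CompactSpace (S.domRestrict '' K) :=
    isCompact_iff_compactSpace.mp ((isCompact_iff_compactSpace.mpr inferInstance).image hcont)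
  let ρ : C(K, S.domRestrict '' K) :=
    ⟨fun x => ⟨S.domRestrict (x : κ → unitInterval), x, x.2, rfl⟩,
      (hcont.comp continuous_subtype_val).subtype_mk _⟩
  refine ⟨ContinuousLinearMap.mk
    (ContinuousMap.compRightAlgHom ℝ ℝ (e.comp ρ)).toLinearMap
    (ContinuousMap.continuous_precomp _), fun f x => congrArg f (he x), ?_⟩
  have hsep : IsSeparable (Set.range fun g : C(S.domRestrict '' K, ℝ) => g.comp ρ) :=
    TopologicalSpace.isSeparable_range (ContinuousMap.continuous_precomp ρ)
  refine hsep.mono ?_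
  rintro _ ⟨f, rfl⟩
  exact ⟨f.comp e, rfl⟩
end

section
/- Let κ be a set and K ⊆ [0,1]^κ a closed (hence compact) subset. If (S_n)_{n∈ℕ} is an increasing sequence of admissible sets for K, then ⋃_{n∈ℕ} S_n is admissible for K. -/
open Set TopologicalSpace unitInterval

variable {κ : Type*}

/-- Let `K ⊆ [0,1]^κ` be a closed (hence compact) subset. If `(S_n)` is
an increasing sequence of admissible sets for `K`, then `⋃_n S_n` is admissible for `K`. -/
theorem stmt18 (K : Set (κ → unitInterval)) (hK : IsClosed K)
    (S : ℕ → Set κ) (hmono : Monotone S) (hadm : ∀ n, Admissible K (S n)) :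
    Admissible K (⋃ n, S n) := by
  intro x hx
  -- At each coordinate the indicators over `S n` are eventually constant, so they converge
  -- in the product topology to the indicator over the union.
  have hlim : Filter.Tendsto (fun n => (S n).indicator x) Filter.atTop
      (nhds ((⋃ n, S n).indicator x)) :=
    tendsto_pi_nhds.2 fun a =>
      (hmono.tendsto_indicator S x a).mono_right (pure_le_nhds _)
  exact hK.mem_of_tendsto hlim (Filter.Eventually.of_forall fun n => hadm n x hx)
end

section
/- Let κ be a set, K ⊆ [0,1]^κ a nonempty closed (hence compact) subset, and (S_n)_{n∈ℕ} an increasing sequence of admissible sets for K with union S = ⋃_n S_n (which is then admissible). Then the range of P_S : C(K) → C(K), P_S(f) = f∘r_S, equals the closure in C(K) of ⋃_{n∈ℕ} P_{S_n}(C(K)); moreover, for every f ∈ C(K), the functions f∘r_{S_n} converge uniformly on K to f∘r_S. -/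
/-! The maps `r_{S_n}` converge to `r_S` uniformly on `K`: the product uniformity is generated by
the coordinates, and in each coordinate `r_{S_n}` agrees with `r_S` for all large `n`, at every point
at once. As `K` is compact, each `f ∈ C(K)` is uniformly continuous, so `f ∘ r_{S_n} → f ∘ r_S`
uniformly. In particular every `P_S f` is a limit of the `P_{S_n} f`. Conversely `r_{S_n} ∘ r_S = r_{S_n}`
puts the range of each `P_{S_n}` inside that of `P_S`, and the range of `P_S` is closed because it is
the fixed-point set of the continuous idempotent `P_S`. -/

open Set TopologicalSpace unitInterval

variable {κ : Type*}

theorem continuous_retr (K : Set (κ → unitInterval)) (T : Set κ) (hT : Admissible K T) :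
    Continuous (retr K T hT) := by
  classical
  refine Continuous.subtype_mk (continuous_pi fun i => ?_) _
  by_cases hi : i ∈ T
  · have h : Continuous fun x : K => (x : κ → unitInterval) i :=
      (continuous_apply i).comp continuous_subtype_val
    simpa [Set.indicator, hi] using h
  · simpa [Set.indicator, hi] using continuous_const

theorem retr_comp_of_subset (K : Set (κ → unitInterval)) {T U : Set κ} (hT : Admissible K T)
    (hU : Admissible K U) (h : T ⊆ U) (x : K) : retr K T hT (retr K U hU x) = retr K T hT x := by
  apply Subtype.ext
  simp only [retr, Set.indicator_indicator, Set.inter_eq_left.mpr h]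

/-- Each coordinate of `r_{S_n}` is eventually equal to that of `r_S`, uniformly on `K`. -/
theorem tendstoUniformly_retr (K : Set (κ → unitInterval)) (S : ℕ → Set κ) (hmono : Monotone S)
    (hadm : ∀ n, Admissible K (S n)) (hU : Admissible K (⋃ n, S n)) :
    TendstoUniformly (fun n => retr K (S n) (hadm n)) (retr K (⋃ n, S n) hU) Filter.atTop := by
  classical
  rw [tendstoUniformly_iff_tendsto, uniformity_subtype, Filter.tendsto_comap_iff,
    Pi.uniformity, Filter.tendsto_iInf]
  intro i
  rw [Filter.tendsto_comap_iff]
  have key : ∀ᶠ n in Filter.atTop, (i ∈ S n ↔ i ∈ ⋃ n, S n) := by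
    by_cases hi : i ∈ ⋃ n, S n
    · obtain ⟨m, hm⟩ := Set.mem_iUnion.mp hi
      filter_upwards [Filter.eventually_ge_atTop m] with n hn
      exact iff_of_true (hmono hn hm) hi
    · exact Filter.Eventually.of_forall fun n =>
        iff_of_false (fun h => hi (Set.mem_iUnion.mpr ⟨n, h⟩)) hi
  intro V hV
  rw [Filter.mem_map]
  filter_upwards [key.prod_inl (⊤ : Filter K)] with q hq
  have heq : (retr K (S q.1) (hadm q.1) q.2 : κ → unitInterval) i
      = (retr K (⋃ n, S n) hU q.2 : κ → unitInterval) i := by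
    simp only [retr, Set.indicator, hq]
  simp only [Set.mem_preimage, Function.comp_apply, heq]
  exact refl_mem_uniformity hV

/-- The operator `P_T : C(K) → C(K)`, `P_T(f) = f ∘ r_T`. -/
noncomputable def projOp (K : Set (κ → unitInterval)) [CompactSpace K] (T : Set κ)
    (hT : Admissible K T) : C(K, ℝ) →L[ℝ] C(K, ℝ) :=
  { toFun := fun f => f.comp ⟨retr K T hT, continuous_retr K T hT⟩
    map_add' := fun _ _ => rfl
    map_smul' := fun _ _ => rfl
    cont := ContinuousMap.continuous_precomp _ }

theorem projOp_apply (K : Set (κ → unitInterval)) [CompactSpace K] (T : Set κ)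
    (hT : Admissible K T) (f : C(K, ℝ)) (x : K) : projOp K T hT f x = f (retr K T hT x) := rfl

/-- Let `K ⊆ [0,1]^κ` be a nonempty closed (hence compact) subset and
`(S_n)` an increasing sequence of admissible sets with union `S = ⋃_n S_n` (which is then
admissible). Then the range of `P_S : C(K) → C(K)`, `P_S(f) = f ∘ r_S`, equals the closure
in `C(K)` of `⋃_n P_{S_n}(C(K))`; moreover, for every `f ∈ C(K)` the functions `f ∘ r_{S_n}`
converge uniformly on `K` to `f ∘ r_S`. -/
theorem stmt19 (K : Set (κ → unitInterval)) (hK : IsClosed K)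
    [CompactSpace K] [Nonempty K]
    (S : ℕ → Set κ) (hmono : Monotone S) (hadm : ∀ n, Admissible K (S n))
    (hU : Admissible K (⋃ n, S n)) :
    ∃ (P : C(K, ℝ) →L[ℝ] C(K, ℝ)) (Pn : ℕ → C(K, ℝ) →L[ℝ] C(K, ℝ)),
      (∀ (f : C(K, ℝ)) (x : K), P f x = f (retr K (⋃ n, S n) hU x)) ∧
      (∀ (n : ℕ) (f : C(K, ℝ)) (x : K), Pn n f x = f (retr K (S n) (hadm n) x)) ∧
      Set.range P = closure (⋃ n, Set.range (Pn n)) ∧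
      ∀ f : C(K, ℝ),
        TendstoUniformly (fun (n : ℕ) (x : K) => f (retr K (S n) (hadm n) x))
          (fun x : K => f (retr K (⋃ n, S n) hU x)) Filter.atTop := by
  have hconv : ∀ f : C(K, ℝ),
      TendstoUniformly (fun (n : ℕ) (x : K) => f (retr K (S n) (hadm n) x))
        (fun x : K => f (retr K (⋃ n, S n) hU x)) Filter.atTop := fun f =>
    (CompactSpace.uniformContinuous_of_continuous f.continuous).comp_tendstoUniformly
      (tendstoUniformly_retr K S hmono hadm hU)
  refine ⟨projOp K _ hU, fun n => projOp K (S n) (hadm n), fun _ _ => rfl, fun _ _ _ => rfl,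
    ?_, hconv⟩
  apply Set.Subset.antisymm
  · rintro _ ⟨f, rfl⟩
    refine mem_closure_of_tendsto (f := fun n => projOp K (S n) (hadm n) f)
      (ContinuousMap.tendsto_iff_tendstoUniformly.mpr (hconv f))
      (Filter.Eventually.of_forall fun n => Set.mem_iUnion.mpr ⟨n, f, rfl⟩)
  · have hfix : Set.range (projOp K _ hU) = {f | projOp K _ hU f = f} := by
      ext g
      constructor
      · rintro ⟨f, rfl⟩
        ext x
        simp only [projOp_apply, retr_comp_of_subset K hU hU subset_rfl]
      · exact fun h => ⟨g, h⟩
    rw [hfix]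
    refine closure_minimal ?_ (isClosed_eq (projOp K _ hU).continuous continuous_id)
    refine Set.iUnion_subset fun n => ?_
    rintro _ ⟨f, rfl⟩
    ext x
    simp only [projOp_apply,
      retr_comp_of_subset K (hadm n) hU (Set.subset_iUnion S n)]
end
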